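/- Let T > 0 and k ≥ 0, and let Z be a GSP-Wiener process on [0,T], i.e. a centered Gaussian process with covariance K(t,s) = min(k+t, k+s), with almost surely continuous paths, viewed as a random variable with values in L²([0,T]). Then the quadratic quantization error has the sharp asymptotics e_n(Z) ~ (√2·T/π)·(ln n)^{-1/2}, i.e. lim_{n→∞} (ln n)^{1/2} · e_n(Z) = √2·T/π. -/

import Mathlib

open MeasureTheory ProbabilityTheory Filter

/-- The `n`-th quadratic quantization error of an `H`-valued random variable:
the infimum over all codebooks `α ⊆ H` with `|α| ≤ n` of
`(E min_{a∈α} ‖X - a‖²)^{1/2}`. -/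
noncomputable def quantErr {Ω : Type*} [MeasurableSpace Ω] (P : Measure Ω)
    {H : Type*} [NormedAddCommGroup H] (X : Ω → H) (n : ℕ) : ℝ :=
  sInf { r : ℝ | ∃ α : Finset H, ∃ hα : α.Nonempty, α.card ≤ n ∧
    r = Real.sqrt (∫ ω, α.inf' hα (fun a => ‖X ω - a‖ ^ 2) ∂P) }

lemma gsp_gauss_tilt (v θ : ℝ) (hv : 0 < v) (hθ : 0 < θ) (a : ℝ) :
    Integrable (fun x => Real.sqrt (max v θ / θ) *
      Real.exp (x ^ 2 / (2 * max v θ) - (x - a) ^ 2 / (2 * θ))) (gaussianReal 0 v.toNNReal) ∧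
    ∫ x, Real.sqrt (max v θ / θ) *
      Real.exp (x ^ 2 / (2 * max v θ) - (x - a) ^ 2 / (2 * θ)) ∂(gaussianReal 0 v.toNNReal) ≤ 1 := by
  have hvn : v.toNNReal ≠ 0 := by simpa using hv
  have hθn : θ.toNNReal ≠ 0 := by simpa using hθ
  rcases le_total θ v with h | h
  · rw [max_eq_left h]
    have key : ∀ x, gaussianPDFReal 0 v.toNNReal x * (Real.sqrt (v / θ) *
      Real.exp (x ^ 2 / (2 * v) - (x - a) ^ 2 / (2 * θ))) = gaussianPDFReal a θ.toNNReal x := by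
      intro x
      simp only [gaussianPDFReal, Real.coe_toNNReal _ hv.le, Real.coe_toNNReal _ hθ.le]
      have h1 : Real.exp (-(x - 0) ^ 2 / (2 * v)) * Real.exp (x ^ 2 / (2 * v) - (x - a) ^ 2 / (2 * θ))
        = Real.exp (-(x - a) ^ 2 / (2 * θ)) := by
        rw [← Real.exp_add]; congr 1; field_simp; ring
      have h2 : (Real.sqrt (2 * Real.pi * v))⁻¹ * Real.sqrt (v / θ) = (Real.sqrt (2 * Real.pi * θ))⁻¹ := by
        rw [← Real.sqrt_inv, ← Real.sqrt_inv, ← Real.sqrt_mul (by positivity)]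
        congr 1; field_simp
      calc _ = ((Real.sqrt (2 * Real.pi * v))⁻¹ * Real.sqrt (v / θ)) * (Real.exp (-(x - 0) ^ 2 / (2 * v)) * Real.exp (x ^ 2 / (2 * v) - (x - a) ^ 2 / (2 * θ))) := by ring
        _ = _ := by rw [h1, h2]
    constructor
    · rw [gaussianReal_of_var_ne_zero _ hvn,
        integrable_withDensity_iff_integrable_smul' (measurable_gaussianPDF _ _)
          (ae_of_all _ fun _ ↦ gaussianPDF_lt_top)]
      simp only [toReal_gaussianPDF, smul_eq_mul, key]
      exact integrable_gaussianPDFReal _ _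
    · rw [integral_gaussianReal_eq_integral_smul hvn]
      simp only [smul_eq_mul, key]
      rw [integral_gaussianPDFReal_eq_one _ hθn]
  · rw [max_eq_right h]
    have key : ∀ x, Real.sqrt (θ / θ) * Real.exp (x ^ 2 / (2 * θ) - (x - a) ^ 2 / (2 * θ)) =
      Real.exp (-(a ^ 2 / (2 * θ))) * Real.exp ((a / θ) * x) := by
      intro x
      rw [div_self hθ.ne', Real.sqrt_one, one_mul, ← Real.exp_add]
      congr 1; field_simp; ring
    simp only [key]
    constructor
    · exact (integrable_exp_mul_gaussianReal _).const_mul _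
    · rw [integral_const_mul]
      have := congrFun (mgf_fun_id_gaussianReal (μ := 0) (v := v.toNNReal)) (a / θ)
      rw [mgf] at this
      rw [this, ← Real.exp_add, Real.exp_le_one_iff, Real.coe_toNNReal _ hv.le]
      have : v * (a / θ) ^ 2 / 2 ≤ a ^ 2 / (2 * θ) := by
        rw [div_pow, div_le_div_iff₀ (by positivity) (by positivity)]
        have : v * (a ^ 2 / θ ^ 2) * (2 * θ) = 2 * a ^ 2 * (v / θ) := by field_simp
        rw [this]
        have : v / θ ≤ 1 := by rw [div_le_one hθ]; exact h
        nlinarith [sq_nonneg a]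
      linarith

lemma gsp_integral_sq_gauss (v : ℝ) (hv : 0 ≤ v) :
    Integrable (fun x : ℝ => x ^ 2) (gaussianReal 0 v.toNNReal) ∧
    ∫ x, x ^ 2 ∂(gaussianReal 0 v.toNNReal) = v := by
  have hm := memLp_id_gaussianReal' (μ := 0) (v := v.toNNReal) 2 (by simp)
  refine ⟨by simpa using hm.integrable_sq, ?_⟩
  have := variance_id_gaussianReal (μ := 0) (v := v.toNNReal)
  rw [variance_eq_integral (by fun_prop)] at this
  simpa [hv] using this

lemma gsp_lower_pi {N : ℕ} (v : Fin N → ℝ) (hv : ∀ j, 0 < v j) (θ : ℝ) (hθ : 0 < θ)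
    {ι : Type*} (α : Finset ι) (hα : α.Nonempty) (b : ι → Fin N → ℝ) (n : ℕ) (hn : α.card ≤ n) :
    θ * (∑ j, (Real.log (max (v j) θ / θ) + v j / max (v j) θ) - 2 * Real.log n) ≤
    ∫ x, α.inf' hα (fun a => ∑ j, (x j - b a j) ^ 2)
      ∂Measure.pi (fun j => gaussianReal 0 (v j).toNNReal) := by
  set μ := Measure.pi (fun j => gaussianReal 0 (v j).toNNReal) with hμ
  have hn0 : 0 < (n : ℝ) := by
    have := hα.card_pos
    exact_mod_cast lt_of_lt_of_le this hn
  have hw : ∀ j, 0 < max (v j) θ := fun j => lt_max_of_lt_right hθ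
  set f : ι → (j : Fin N) → ℝ → ℝ := fun a j x => Real.sqrt (max (v j) θ / θ) *
      Real.exp (x ^ 2 / (2 * max (v j) θ) - (x - b a j) ^ 2 / (2 * θ)) with hf
  set Y : (Fin N → ℝ) → ℝ := fun x => ∑ a ∈ α, ∏ j, f a j (x j) with hY
  set Λ : (Fin N → ℝ) → ℝ := fun x => ∑ j, (Real.log (max (v j) θ / θ) / 2 + x j ^ 2 / (2 * max (v j) θ)) with hΛ
  set m : (Fin N → ℝ) → ℝ := fun x => α.inf' hα (fun a => ∑ j, (x j - b a j) ^ 2) with hm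
  have hfint : ∀ a, Integrable (fun x : Fin N → ℝ => ∏ j, f a j (x j)) μ := fun a =>
    Integrable.fintype_prod_dep (fun j => (gsp_gauss_tilt (v j) θ (hv j) hθ (b a j)).1)
  have hYint : Integrable Y μ := integrable_finsetSum _ fun a _ => hfint a
  have hsq : ∀ j, Integrable (fun x : Fin N → ℝ => x j ^ 2) μ := fun j =>
    integrable_comp_eval (μ := fun j => gaussianReal 0 (v j).toNNReal) (i := j) (f := fun x => x ^ 2)
      (gsp_integral_sq_gauss (v j) (hv j).le).1
  have hΛint : Integrable Λ μ := integrable_finsetSum _ fun j _ =>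
    (integrable_const _).add ((hsq j).div_const _)
  have hid : ∀ j, Integrable (fun x : Fin N → ℝ => x j) μ := fun j =>
    integrable_comp_eval (μ := fun j => gaussianReal 0 (v j).toNNReal) (i := j) (f := fun x => x)
      ((memLp_id_gaussianReal' 1 (by simp)).integrable (by simp))
  have hmint : Integrable m μ := by
    obtain ⟨a0, ha0⟩ := hα
    have hd : Integrable (fun x : Fin N → ℝ => ∑ j, (x j - b a0 j) ^ 2) μ := by
      refine integrable_finsetSum _ fun j _ => ?_
      have : (fun x : Fin N → ℝ => (x j - b a0 j) ^ 2) = fun x => x j ^ 2 - 2 * b a0 j * x j + b a0 j ^ 2 := by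
        ext x; ring
      rw [this]
      exact ((hsq j).sub ((hid j).const_mul _)).add (integrable_const _)
    refine hd.mono' ?_ (ae_of_all _ fun x => ?_)
    · refine Continuous.aestronglyMeasurable ?_
      exact Continuous.finset_inf'_apply _ fun i _ => by fun_prop
    · have h0 : 0 ≤ m x := Finset.le_inf' _ _ fun a _ => Finset.sum_nonneg fun j _ => sq_nonneg _
      rw [Real.norm_of_nonneg h0]
      exact Finset.inf'_le _ ha0
  have hpt : ∀ x, Λ x - m x / (2 * θ) ≤ Y x / n + (Real.log n - 1) := by
    intro x
    obtain ⟨a, ha, hae⟩ := Finset.exists_mem_eq_inf' hα (fun a => ∑ j, (x j - b a j) ^ 2)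
    have h1 : Real.exp (Λ x - m x / (2 * θ)) = ∏ j, f a j (x j) := by
      simp only [hm, hae, hΛ, hf, Finset.sum_div]
      rw [← Finset.sum_sub_distrib, Real.exp_sum]
      refine Finset.prod_congr rfl fun j _ => ?_
      rw [add_sub_assoc, Real.exp_add]
      congr 1
      rw [← Real.log_sqrt (div_nonneg (hw j).le hθ.le), Real.exp_log]
      exact Real.sqrt_pos.2 (div_pos (hw j) hθ)
    have h2 : ∏ j, f a j (x j) ≤ Y x :=
      Finset.single_le_sum (f := fun a => ∏ j, f a j (x j))
        (fun a _ => Finset.prod_nonneg fun j _ => by simp only [hf]; positivity) ha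
    have h3 := Real.add_one_le_exp (Λ x - m x / (2 * θ) - Real.log n)
    rw [Real.exp_sub, Real.exp_log hn0, h1] at h3
    have h4 : (∏ j, f a j (x j)) / n ≤ Y x / n := by gcongr
    linarith
  have hI := integral_mono (hΛint.sub (hmint.div_const (2 * θ)))
    ((hYint.div_const n).add (integrable_const _)) hpt
  simp only [Pi.sub_apply, Pi.add_apply] at hI
  rw [integral_sub hΛint (hmint.div_const _), integral_add (hYint.div_const _) (integrable_const _),
    integral_div, integral_div] at hI
  have hΛv : ∫ x, Λ x ∂μ = ∑ j, (Real.log (max (v j) θ / θ) / 2 + v j / (2 * max (v j) θ)) := by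
    have hj : ∀ j ∈ Finset.univ, Integrable (fun x : Fin N → ℝ => Real.log (max (v j) θ / θ) / 2 + x j ^ 2 / (2 * max (v j) θ)) μ :=
      fun j _ => (integrable_const _).add ((hsq j).div_const _)
    simp only [hΛ]
    rw [integral_finsetSum _ hj]
    refine Finset.sum_congr rfl fun j _ => ?_
    rw [integral_add (integrable_const _) ((hsq j).div_const _), integral_div, integral_div]
    have := integral_comp_eval (μ := fun j => gaussianReal 0 (v j).toNNReal) (i := j) (f := fun x : ℝ => x ^ 2)
      (by fun_prop)
    rw [this, (gsp_integral_sq_gauss (v j) (hv j).le).2]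
    simp
  have hYv : ∫ x, Y x ∂μ ≤ n := by
    rw [hY, integral_finsetSum _ fun a _ => hfint a]
    calc _ ≤ ∑ a ∈ α, (1 : ℝ) := by
          refine Finset.sum_le_sum fun a _ => ?_
          rw [hμ, integral_fintype_prod_eq_prod]
          refine Finset.prod_le_one (fun j _ => integral_nonneg fun x => ?_) (fun j _ => ?_)
          · simp only [hf, Pi.zero_apply]; positivity
          · exact (gsp_gauss_tilt (v j) θ (hv j) hθ (b a j)).2
      _ ≤ n := by simpa using hn
  have hYn : (∫ x, Y x ∂μ) / n ≤ 1 := by rw [div_le_one hn0]; exact hYv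
  rw [hΛv] at hI
  simp only [integral_const, probReal_univ, one_smul] at hI
  have hs : ∑ j, (Real.log (max (v j) θ / θ) / 2 + v j / (2 * max (v j) θ)) =
     (∑ j, (Real.log (max (v j) θ / θ) + v j / max (v j) θ)) / 2 := by
    rw [Finset.sum_div]; refine Finset.sum_congr rfl fun j _ => ?_
    have := (hw j).ne'
    field_simp
  rw [hs] at hI
  have hfin : (∑ j, (Real.log (max (v j) θ / θ) + v j / max (v j) θ)) / 2 - Real.log n ≤ (∫ x, m x ∂μ) / (2 * θ) := by linarith
  rw [le_div_iff₀ (by positivity)] at hfin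
  linarith

noncomputable def gspKappa : ℝ := ∫ x : ℝ, x ^ 4 ∂(gaussianReal 0 1)

lemma gsp_int_four : Integrable (fun x : ℝ => x ^ 4) (gaussianReal 0 1) := by
  have := (memLp_id_gaussianReal' (μ := 0) (v := 1) 4 (by simp)).integrable_norm_pow (by norm_num)
  refine this.congr (ae_of_all _ fun x => ?_)
  simp only [id, Real.norm_eq_abs]
  exact Even.pow_abs (by decide) x

lemma gspKappa_nonneg : 0 ≤ gspKappa := integral_nonneg fun x => by positivity

lemma gsp_memLp_sq : MemLp (fun x : ℝ => x ^ 2) 2 (gaussianReal 0 1) := by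
  rw [memLp_two_iff_integrable_sq (by fun_prop)]
  refine gsp_int_four.congr (ae_of_all _ fun x => ?_)
  simp only []; ring

/-- standard gaussian on `Fin D → ℝ` -/
noncomputable def gspStd (D : ℕ) : Measure (Fin D → ℝ) := Measure.pi (fun _ => gaussianReal 0 1)

instance (D : ℕ) : IsProbabilityMeasure (gspStd D) := by unfold gspStd; infer_instance

lemma gsp_chi (D : ℕ) : MemLp (fun u : Fin D → ℝ => ∑ j, u j ^ 2) 2 (gspStd D) ∧
    ∫ u, ∑ j, u j ^ 2 ∂(gspStd D) = D ∧
    Var[fun u : Fin D → ℝ => ∑ j, u j ^ 2; gspStd D] ≤ D * gspKappa := by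
  have hmp : ∀ j : Fin D, MeasurePreserving (Function.eval j) (gspStd D) (gaussianReal 0 1) :=
    fun j => measurePreserving_eval (fun _ => gaussianReal 0 1) j
  have h1 : ∀ j : Fin D, MemLp (fun u : Fin D → ℝ => u j ^ 2) 2 (gspStd D) := fun j =>
    gsp_memLp_sq.comp_measurePreserving (hmp j)
  refine ⟨memLp_finsetSum _ fun j _ => h1 j, ?_, ?_⟩
  · rw [integral_finsetSum _ fun j _ => (h1 j).integrable (by norm_num)]
    have : ∀ j : Fin D, ∫ u, u j ^ 2 ∂(gspStd D) = 1 := by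
      intro j
      have := integral_comp_eval (μ := fun _ : Fin D => gaussianReal 0 1) (i := j) (f := fun x : ℝ => x ^ 2)
        (by fun_prop)
      rw [gspStd, this]
      have h := variance_id_gaussianReal (μ := 0) (v := 1)
      rw [variance_eq_integral (by fun_prop)] at h
      simpa using h
    simp [this]
  · have h := variance_sum_pi (μ := fun _ : Fin D => gaussianReal 0 1) (X := fun _ x => x ^ 2)
      (fun _ => gsp_memLp_sq)
    have e : (fun u : Fin D → ℝ => ∑ j, u j ^ 2) = ∑ j, fun u : Fin D → ℝ => u j ^ 2 := by
      ext u; simp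
    rw [gspStd, e, h]
    have : Var[fun x : ℝ => x ^ 2; gaussianReal 0 1] ≤ gspKappa := by
      refine (variance_le_expectation_sq (by fun_prop)).trans (le_of_eq ?_)
      simp only [gspKappa, Pi.pow_apply]
      congr 1; ext x; ring
    calc _ ≤ ∑ j : Fin D, gspKappa := Finset.sum_le_sum fun _ _ => this
      _ = _ := by simp

lemma gsp_chi_sq (D : ℕ) : Integrable (fun u : Fin D → ℝ => (∑ j, u j ^ 2) ^ 2) (gspStd D) ∧
    ∫ u, (∑ j, u j ^ 2) ^ 2 ∂(gspStd D) ≤ D ^ 2 + D * gspKappa := by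
  obtain ⟨h1, h2, h3⟩ := gsp_chi D
  refine ⟨h1.integrable_sq, ?_⟩
  rw [variance_eq_sub h1] at h3
  simp only [Pi.pow_apply] at h3
  rw [h2] at h3
  linarith

lemma gsp_chi_tail (D : ℕ) (hD : 0 < D) (ε : ℝ) (hε : 0 < ε) :
    (gspStd D) {u | ε * D ≤ |∑ j, u j ^ 2 - D|} ≤ ENNReal.ofReal (gspKappa / (ε ^ 2 * D)) := by
  obtain ⟨h1, h2, h3⟩ := gsp_chi D
  have hD' : (0 : ℝ) < D := by exact_mod_cast hD
  have := meas_ge_le_variance_div_sq h1 (c := ε * D) (by positivity)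
  rw [h2] at this
  refine this.trans (ENNReal.ofReal_le_ofReal ?_)
  rw [div_le_div_iff₀ (by positivity) (by positivity)]
  calc _ ≤ (D * gspKappa) * (ε ^ 2 * D) := by gcongr
    _ = _ := by ring

/-- centered gaussian with independent coordinates of variances `s j` -/
noncomputable def gspG {D : ℕ} (s : Fin D → ℝ) : Measure (Fin D → ℝ) :=
  Measure.pi (fun j => gaussianReal 0 (s j).toNNReal)

instance {D : ℕ} (s : Fin D → ℝ) : IsProbabilityMeasure (gspG s) := by unfold gspG; infer_instance

lemma gspG_eq_map {D : ℕ} (s : Fin D → ℝ) (hs : ∀ j, 0 ≤ s j) :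
    gspG s = (gspStd D).map (fun u j => Real.sqrt (s j) * u j) := by
  rw [gspStd, Measure.pi_map_pi (fun i => by fun_prop), gspG]
  congr 1; ext1 j
  rw [gaussianReal_map_const_mul]
  congr 1
  · simp
  · ext; simp [Real.sq_sqrt (hs j), hs j]

lemma gspG_add {D : ℕ} (s t : Fin D → ℝ) (hs : ∀ j, 0 ≤ s j) (ht : ∀ j, 0 ≤ t j) :
    ((gspG s).prod (gspG t)).map (fun p => p.1 + p.2) = gspG (fun j => s j + t j) := by
  have : IsProbabilityMeasure (((gspG s).prod (gspG t)).map (fun p => p.1 + p.2)) :=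
    Measure.isProbabilityMeasure_map (by fun_prop)
  refine charFun_eq_pi_iff.1 fun z => ?_
  rw [Measure.map_map (by fun_prop) (by fun_prop)]
  rw [charFun_apply, integral_map (by fun_prop) (by fun_prop)]
  have h1 : ∀ p : (Fin D → ℝ) × (Fin D → ℝ),
    Complex.exp (inner ℝ ((WithLp.toLp 2 ∘ fun p : (Fin D → ℝ) × (Fin D → ℝ) => p.1 + p.2) p) z * Complex.I) =
      (∏ j, Complex.exp (z j * p.1 j * Complex.I)) * ∏ j, Complex.exp (z j * p.2 j * Complex.I) := by
    intro p
    rw [← Complex.exp_sum, ← Complex.exp_sum, ← Complex.exp_add]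
    simp [PiLp.inner_apply, Finset.sum_mul, ← Finset.sum_add_distrib, mul_add, add_mul]
  simp_rw [h1]
  rw [integral_prod_mul (fun x : Fin D → ℝ => ∏ j, Complex.exp (z j * x j * Complex.I))
    (fun x : Fin D → ℝ => ∏ j, Complex.exp (z j * x j * Complex.I)), gspG, gspG,
    integral_fintype_prod_eq_prod (fun j (x : ℝ) => Complex.exp (z j * x * Complex.I)),
    integral_fintype_prod_eq_prod (fun j (x : ℝ) => Complex.exp (z j * x * Complex.I)),
    ← Finset.prod_mul_distrib]
  refine Finset.prod_congr rfl fun j _ => ?_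
  simp_rw [← charFun_apply_real, charFun_gaussianReal]
  rw [← Complex.exp_add]
  simp [hs j, ht j]
  ring_nf

lemma gspG_density {D : ℕ} (s : Fin D → ℝ) (hs : ∀ j, 0 < s j) :
    gspG s = (volume : Measure (Fin D → ℝ)).withDensity
      (fun x => ENNReal.ofReal (∏ j, gaussianPDFReal 0 (s j).toNNReal (x j))) := by
  rw [gspG]
  refine Measure.pi_eq fun t ht => ?_
  have hi : ∀ j, Integrable (gaussianPDFReal 0 (s j).toNNReal) (volume.restrict (t j)) :=
    fun j => (integrable_gaussianPDFReal _ _).restrict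
  rw [withDensity_apply _ (MeasurableSet.univ_pi ht), volume_pi, Measure.restrict_pi_pi,
    ← ofReal_integral_eq_lintegral_ofReal, integral_fintype_prod_eq_prod, ENNReal.ofReal_prod_of_nonneg]
  · refine Finset.prod_congr rfl fun j _ => ?_
    rw [gaussianReal_apply_eq_integral _ (by simpa using hs j)]
  · exact fun j _ => integral_nonneg fun x => gaussianPDFReal_nonneg _ _ _
  · exact Integrable.fintype_prod_dep hi
  · exact ae_of_all _ fun x => Finset.prod_nonneg fun j _ => gaussianPDFReal_nonneg _ _ _

lemma gsp_prod_pdf {D : ℕ} (s : Fin D → ℝ) (hs : ∀ j, 0 < s j) (x : Fin D → ℝ) :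
    ∏ j, gaussianPDFReal 0 (s j).toNNReal (x j) =
      (∏ _j : Fin D, (Real.sqrt (2 * Real.pi))⁻¹) * Real.exp (-(∑ j, Real.log (s j)) / 2) * Real.exp (-(∑ j, x j ^ 2 / s j) / 2) := by
  have : -(∑ j, Real.log (s j)) / 2 = ∑ j, -(Real.log (s j)) / 2 := by
    rw [← Finset.sum_neg_distrib, Finset.sum_div]
  rw [this, Real.exp_sum]
  have : -(∑ j, x j ^ 2 / s j) / 2 = ∑ j, -(x j ^ 2 / s j) / 2 := by
    rw [← Finset.sum_neg_distrib, Finset.sum_div]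
  rw [this, Real.exp_sum, ← Finset.prod_mul_distrib, ← Finset.prod_mul_distrib]
  refine Finset.prod_congr rfl fun j _ => ?_
  rw [gaussianPDFReal, Real.coe_toNNReal _ (hs j).le, Real.sqrt_mul (by positivity), mul_inv]
  have h1 : Real.exp (-Real.log (s j) / 2) = (Real.sqrt (s j))⁻¹ := by
    rw [neg_div, Real.exp_neg, ← Real.log_sqrt (hs j).le, Real.exp_log (Real.sqrt_pos.2 (hs j))]
  rw [h1]
  congr 1
  congr 1
  have := (hs j).ne'
  simp; field_simp

lemma gspStd_eq (D : ℕ) : gspStd D = gspG (fun _ : Fin D => (1 : ℝ)) := by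
  simp [gspStd, gspG]

lemma gsp_chi_tail' {D : ℕ} (hD : 0 < D) (s : Fin D → ℝ) (hs : ∀ j, 0 < s j) (ε : ℝ) (hε : 0 < ε) :
    (gspG s) {x | D * (1 + ε) < ∑ j, x j ^ 2 / s j} ≤ ENNReal.ofReal (gspKappa / (ε ^ 2 * D)) := by
  rw [gspG_eq_map s fun j => (hs j).le, Measure.map_apply (by fun_prop)
    (measurableSet_lt (by fun_prop) (by fun_prop))]
  refine (measure_mono ?_).trans (gsp_chi_tail D hD ε hε)
  intro u hu
  simp only [Set.mem_preimage, Set.mem_ofPred_eq] at hu ⊢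
  have : ∀ j, (Real.sqrt (s j) * u j) ^ 2 / s j = u j ^ 2 := by
    intro j
    rw [mul_pow, Real.sq_sqrt (hs j).le, mul_div_cancel_left₀ _ (hs j).ne']
  simp only [this] at hu
  rw [le_abs]; left; linarith

lemma gsp_bad_set {D : ℕ} (hD : 0 < D) (s : Fin D → ℝ) (hs : ∀ j, 1 ≤ s j) (ε : ℝ) (hε : 0 < ε)
    (t : ℝ) (ht : t = (∑ j, Real.log (s j)) / 2 + 2 * ε * D) :
    gspG s {x | gspG (fun j => s j - 1) {y | ∑ j, (x j - y j) ^ 2 ≤ D * (1 + ε)} <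
      ENNReal.ofReal (Real.exp (-t))} ≤
      ENNReal.ofReal (Real.exp (-(ε * D)) + 2 * (gspKappa / (ε ^ 2 * D))) := by
  have hD' : (0 : ℝ) < D := by exact_mod_cast hD
  have hs0 : ∀ j, 0 < s j := fun j => lt_of_lt_of_le one_pos (hs j)
  set Q := gspG (fun j => s j - 1) with hQ
  set r : ℝ := D * (1 + ε) with hr
  set r0 : ℝ := D * (1 - ε) with hr0
  set q : (Fin D → ℝ) → ENNReal := fun x => Q {y | ∑ j, (x j - y j) ^ 2 ≤ r} with hq
  have hSmeas : MeasurableSet {p : (Fin D → ℝ) × (Fin D → ℝ) | ∑ j, (p.1 j - p.2 j) ^ 2 ≤ r} :=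
    measurableSet_le (by fun_prop) (by fun_prop)
  have hqm : Measurable q := measurable_measure_prodMk_left hSmeas
  set B : Set (Fin D → ℝ) := {x | q x < ENNReal.ofReal (Real.exp (-t))} with hB
  have hBm : MeasurableSet B := measurableSet_lt hqm measurable_const
  set Ty : Set (Fin D → ℝ) := {x | ∑ j, x j ^ 2 / s j ≤ r} with hTy
  have hTym : MeasurableSet Ty := measurableSet_le (by fun_prop) (by fun_prop)
  set U := gspStd D with hU
  have hadd : (Q.prod U).map (fun p => p.1 + p.2) = gspG s := by
    rw [hQ, hU, gspStd_eq, gspG_add _ _ (fun j => by linarith [hs j]) (fun j => zero_le_one)]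
    simp
  set c0 : ℝ := ∏ _j : Fin D, (Real.sqrt (2 * Real.pi))⁻¹ with hc0
  have hc0p : 0 ≤ c0 := Finset.prod_nonneg fun j _ => by positivity
  -- the main event
  set E : Set ((Fin D → ℝ) × (Fin D → ℝ)) := {p | p.1 + p.2 ∈ B ∩ Ty ∧ r0 ≤ ∑ j, p.2 j ^ 2 ∧ ∑ j, p.2 j ^ 2 ≤ r} with hE
  have hEm : MeasurableSet E := by
    have a1 : MeasurableSet {p : (Fin D → ℝ) × (Fin D → ℝ) | p.1 + p.2 ∈ B ∩ Ty} :=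
      (measurable_fst.add measurable_snd) (hBm.inter hTym)
    have a2 : MeasurableSet {p : (Fin D → ℝ) × (Fin D → ℝ) | r0 ≤ ∑ j, p.2 j ^ 2} :=
      measurableSet_le (by fun_prop) (by fun_prop)
    have a3 : MeasurableSet {p : (Fin D → ℝ) × (Fin D → ℝ) | ∑ j, p.2 j ^ 2 ≤ r} :=
      measurableSet_le (by fun_prop) (by fun_prop)
    exact a1.inter (a2.inter a3)
  have hUd : U = (volume : Measure (Fin D → ℝ)).withDensity
      (fun x => ENNReal.ofReal (c0 * Real.exp (-(∑ j, x j ^ 2) / 2))) := by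
    rw [hU, gspStd_eq, gspG_density _ fun j => one_pos]
    congr 1; ext1 x
    rw [gsp_prod_pdf _ fun j => one_pos]
    simp [hc0]
  have hPd : gspG s = (volume : Measure (Fin D → ℝ)).withDensity
      (fun x => ENNReal.ofReal (c0 * Real.exp (-(∑ j, Real.log (s j)) / 2) * Real.exp (-(∑ j, x j ^ 2 / s j) / 2))) := by
    rw [gspG_density _ hs0]
    congr 1; ext1 x
    rw [gsp_prod_pdf _ hs0]
  have hE1 : (Q.prod U) E ≤ ENNReal.ofReal (Real.exp (-(ε * D))) := by
    -- step 1
    have step1 : ∀ y, U (Prod.mk y ⁻¹' E) ≤ ∫⁻ x, ENNReal.ofReal (c0 * Real.exp (-r0 / 2)) *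
        (B ∩ Ty).indicator 1 x * {x | ∑ j, (x j - y j) ^ 2 ≤ r}.indicator 1 x := by
      intro y
      rw [← lintegral_add_right_eq_self _ y, hUd, withDensity_apply _ (measurable_prodMk_left hEm),
        ← lintegral_indicator (measurable_prodMk_left hEm)]
      refine lintegral_mono fun u => ?_
      by_cases hu : u ∈ Prod.mk y ⁻¹' E
      · rw [Set.indicator_of_mem hu]
        obtain ⟨h1, h2, h3⟩ := hu
        simp only at h1 h2 h3
        rw [add_comm y u] at h1
        rw [Set.indicator_of_mem h1, Set.indicator_of_mem (by simpa using h3)]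
        simp only [Pi.one_apply, mul_one]
        refine ENNReal.ofReal_le_ofReal ?_
        gcongr
      · rw [Set.indicator_of_notMem hu]; exact zero_le
    have hm1 : Measurable (fun p : (Fin D → ℝ) × (Fin D → ℝ) => ENNReal.ofReal (c0 * Real.exp (-r0 / 2)) *
        (B ∩ Ty).indicator 1 p.2 * {x | ∑ j, (x j - p.1 j) ^ 2 ≤ r}.indicator (1 : (Fin D → ℝ) → ENNReal) p.2) := by
      refine Measurable.mul (Measurable.mul measurable_const ?_) ?_
      · exact (measurable_one.indicator (hBm.inter hTym)).comp measurable_snd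
      · have : (fun p : (Fin D → ℝ) × (Fin D → ℝ) => {x | ∑ j, (x j - p.1 j) ^ 2 ≤ r}.indicator (1 : (Fin D → ℝ) → ENNReal) p.2)
          = {p : (Fin D → ℝ) × (Fin D → ℝ) | ∑ j, (p.2 j - p.1 j) ^ 2 ≤ r}.indicator 1 := by
          ext p; simp [Set.indicator_apply]
        rw [this]
        exact measurable_one.indicator (measurableSet_le (by fun_prop) (by fun_prop))
    calc (Q.prod U) E = ∫⁻ y, U (Prod.mk y ⁻¹' E) ∂Q := Measure.prod_apply hEm
      _ ≤ ∫⁻ y, ∫⁻ x, ENNReal.ofReal (c0 * Real.exp (-r0 / 2)) *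
        (B ∩ Ty).indicator 1 x * {x | ∑ j, (x j - y j) ^ 2 ≤ r}.indicator 1 x ∂volume ∂Q := lintegral_mono step1
      _ = ∫⁻ x, ∫⁻ y, ENNReal.ofReal (c0 * Real.exp (-r0 / 2)) *
        (B ∩ Ty).indicator 1 x * {x | ∑ j, (x j - y j) ^ 2 ≤ r}.indicator 1 x ∂Q ∂volume :=
          lintegral_lintegral_swap hm1.aemeasurable
      _ = ∫⁻ x, ENNReal.ofReal (c0 * Real.exp (-r0 / 2)) * (B ∩ Ty).indicator 1 x * q x := by
          refine lintegral_congr fun x => ?_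
          have hmx : MeasurableSet {y : Fin D → ℝ | ∑ j, (x j - y j) ^ 2 ≤ r} :=
            measurableSet_le (by fun_prop) (by fun_prop)
          have : ∀ y : Fin D → ℝ, {x : Fin D → ℝ | ∑ j, (x j - y j) ^ 2 ≤ r}.indicator (1 : (Fin D → ℝ) → ENNReal) x =
            {y : Fin D → ℝ | ∑ j, (x j - y j) ^ 2 ≤ r}.indicator 1 y := by
            intro y; simp [Set.indicator_apply]
          simp_rw [this]
          rw [lintegral_const_mul _ (measurable_one.indicator hmx), lintegral_indicator_one hmx]
      _ ≤ ∫⁻ x : Fin D → ℝ, ENNReal.ofReal (Real.exp (-(ε * D))) * ((ENNReal.ofReal (c0 * Real.exp (-(∑ j, Real.log (s j)) / 2) * Real.exp (-(∑ j, x j ^ 2 / s j) / 2))) * 1) := by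
          refine lintegral_mono fun x => ?_
          by_cases hx : x ∈ B ∩ Ty
          · rw [Set.indicator_of_mem hx]
            simp only [Pi.one_apply, mul_one]
            have h1 : q x ≤ ENNReal.ofReal (Real.exp (-t)) := hx.1.le
            have h2 : ∑ j, x j ^ 2 / s j ≤ r := hx.2
            calc _ ≤ ENNReal.ofReal (c0 * Real.exp (-r0 / 2)) * ENNReal.ofReal (Real.exp (-t)) := by gcongr
              _ = ENNReal.ofReal (c0 * Real.exp (-r0 / 2 - t)) := by
                rw [← ENNReal.ofReal_mul (by positivity), mul_assoc, ← Real.exp_add]; rfl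
              _ ≤ ENNReal.ofReal (c0 * Real.exp (-(ε * D) + -(∑ j, Real.log (s j)) / 2 + -(∑ j, x j ^ 2 / s j) / 2)) := by
                refine ENNReal.ofReal_le_ofReal ?_
                gcongr
                rw [hr] at h2
                rw [hr0, ht]; linarith
              _ = _ := by
                rw [← ENNReal.ofReal_mul (by positivity), Real.exp_add, Real.exp_add]
                congr 1; ring
          · rw [Set.indicator_of_notMem hx]; simp
      _ = ENNReal.ofReal (Real.exp (-(ε * D))) * (gspG s) Set.univ := by
          rw [lintegral_const_mul _ (by fun_prop)]
          simp only [mul_one]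
          rw [hPd, withDensity_apply _ MeasurableSet.univ]
          simp
      _ = _ := by simp
  -- decomposition
  have hdec : gspG s B ≤ (Q.prod U) E + (gspG s) Tyᶜ + U {u | ε * D ≤ |∑ j, u j ^ 2 - D|} := by
    have e1 : gspG s B = (Q.prod U) ((fun p => p.1 + p.2) ⁻¹' B) := by
      rw [← hadd, Measure.map_apply (by fun_prop) hBm]
    have e2 : gspG s Tyᶜ = (Q.prod U) ((fun p => p.1 + p.2) ⁻¹' Tyᶜ) := by
      rw [← hadd, Measure.map_apply (by fun_prop) hTym.compl]
    have hm3 : MeasurableSet {u : Fin D → ℝ | ε * D ≤ |∑ j, u j ^ 2 - D|} :=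
      measurableSet_le (by fun_prop) (by fun_prop)
    have e3 : U {u | ε * D ≤ |∑ j, u j ^ 2 - D|} = (Q.prod U) (Prod.snd ⁻¹' {u | ε * D ≤ |∑ j, u j ^ 2 - D|}) := by
      rw [(measurePreserving_snd (μ := Q) (ν := U)).measure_preimage hm3.nullMeasurableSet]
    rw [e1, e2, e3]
    refine le_trans (measure_mono ?_) ((measure_union_le _ _).trans (add_le_add (measure_union_le E _) le_rfl))
    intro p hp
    by_cases h1 : p.1 + p.2 ∈ Ty
    · by_cases h2 : ε * D ≤ |∑ j, p.2 j ^ 2 - D|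
      · right; exact h2
      · left; left
        push Not at h2
        rw [abs_lt] at h2
        refine ⟨⟨hp, h1⟩, ?_, ?_⟩
        · rw [hr0]; linarith [h2.1]
        · rw [hr]; linarith [h2.2]
    · left; right; exact h1
  have hT : (gspG s) Tyᶜ ≤ ENNReal.ofReal (gspKappa / (ε ^ 2 * D)) := by
    have : Tyᶜ = {x | D * (1 + ε) < ∑ j, x j ^ 2 / s j} := by
      ext x; simp [hTy, hr]
    rw [this]; exact gsp_chi_tail' hD s hs0 ε hε
  have hk := gspKappa_nonneg
  refine hdec.trans ((add_le_add (add_le_add hE1 hT) (gsp_chi_tail D hD ε hε)).trans (le_of_eq ?_))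
  rw [← ENNReal.ofReal_add (by positivity) (by positivity), ← ENNReal.ofReal_add (by positivity) (by positivity)]
  congr 1; ring

lemma gsp_chi_lint {D : ℕ} (hD : 0 < D) (s : Fin D → ℝ) (hs : ∀ j, 0 < s j) (δ : ℝ) (hδ : 0 < δ) :
    ∫⁻ x, ENNReal.ofReal (δ / D * (∑ j, x j ^ 2 / s j) ^ 2) ∂(gspG s) ≤ ENNReal.ofReal (δ * (D + gspKappa)) := by
  have hD' : (0 : ℝ) < D := by exact_mod_cast hD
  rw [gspG_eq_map s fun j => (hs j).le, lintegral_map (by fun_prop) (by fun_prop)]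
  have : ∀ (u : Fin D → ℝ) j, (Real.sqrt (s j) * u j) ^ 2 / s j = u j ^ 2 := by
    intro u j
    rw [mul_pow, Real.sq_sqrt (hs j).le, mul_div_cancel_left₀ _ (hs j).ne']
  simp only [this]
  obtain ⟨h1, h2⟩ := gsp_chi_sq D
  rw [← ofReal_integral_eq_lintegral_ofReal (h1.const_mul _) (ae_of_all _ fun x => by positivity)]
  refine ENNReal.ofReal_le_ofReal ?_
  rw [integral_const_mul]
  calc _ ≤ δ / D * (D ^ 2 + D * gspKappa) := by gcongr
    _ = _ := by field_simp

lemma gsp_achieve {D : ℕ} (hD : 0 < D) (s : Fin D → ℝ) (hs : ∀ j, 1 ≤ s j) (L : ℝ) (hL : ∀ j, s j ≤ L)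
    (ε : ℝ) (hε : 0 < ε) (δ : ℝ) (hδ : 0 < δ) (n : ℕ)
    (t : ℝ) (ht : t = (∑ j, Real.log (s j)) / 2 + 2 * ε * D) :
    ∃ C : Finset (Fin D → ℝ), ∃ hC : C.Nonempty, C.card ≤ n + 1 ∧
      ∫ x, C.inf' hC (fun a => ∑ j, (x j - a j) ^ 2) ∂(gspG s) ≤
        D * (1 + ε) + L * (δ * (D + gspKappa) + D / (4 * δ) *
          (Real.exp (-(ε * D)) + 2 * (gspKappa / (ε ^ 2 * D)) + Real.exp (-(n * Real.exp (-t))))) := by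
  classical
  have hD' : (0 : ℝ) < D := by exact_mod_cast hD
  have hk := gspKappa_nonneg
  have hs0 : ∀ j, 0 < s j := fun j => lt_of_lt_of_le one_pos (hs j)
  have hL0 : 0 ≤ L := (hs0 ⟨0, hD⟩).le.trans (hL _)
  have hbad := gsp_bad_set hD s hs ε hε t ht
  set Q := gspG (fun j => s j - 1) with hQ
  set P := gspG s with hP
  set r : ℝ := D * (1 + ε) with hr
  have hr0 : 0 ≤ r := by positivity
  have hSmeas : MeasurableSet {p : (Fin D → ℝ) × (Fin D → ℝ) | r < ∑ j, (p.1 j - p.2 j) ^ 2} :=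
    measurableSet_lt (by fun_prop) (by fun_prop)
  set w : (Fin D → ℝ) → ENNReal := fun x => (Q {y | r < ∑ j, (x j - y j) ^ 2}) ^ n with hw
  have hwm : Measurable w := (measurable_measure_prodMk_left hSmeas).pow_const n
  set F : Set ((Fin n → Fin D → ℝ) × (Fin D → ℝ)) := {p | ∀ i, r < ∑ j, (p.2 j - p.1 i j) ^ 2} with hF
  have hFm : MeasurableSet F := by
    have : F = ⋂ i, {p : (Fin n → Fin D → ℝ) × (Fin D → ℝ) | r < ∑ j, (p.2 j - p.1 i j) ^ 2} := by
      ext p; simp [hF]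
    rw [this]
    exact MeasurableSet.iInter fun i => measurableSet_lt (by fun_prop) (by fun_prop)
  have hGm : Measurable (fun p : (Fin n → Fin D → ℝ) × (Fin D → ℝ) =>
      ENNReal.ofReal (∑ j, p.2 j ^ 2) * F.indicator 1 p) :=
    Measurable.mul (by fun_prop) (measurable_one.indicator hFm)
  -- averaged
  have havg : ∫⁻ a, ∫⁻ x, ENNReal.ofReal (∑ j, x j ^ 2) * F.indicator 1 (a, x) ∂P ∂(Measure.pi fun _ : Fin n => Q)
      = ∫⁻ x, ENNReal.ofReal (∑ j, x j ^ 2) * w x ∂P := by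
    rw [lintegral_lintegral_swap hGm.aemeasurable]
    refine lintegral_congr fun x => ?_
    have e : ∀ a : Fin n → Fin D → ℝ, F.indicator (1 : (Fin n → Fin D → ℝ) × (Fin D → ℝ) → ENNReal) (a, x) =
      (Set.univ.pi fun _ : Fin n => {y : Fin D → ℝ | r < ∑ j, (x j - y j) ^ 2}).indicator 1 a := by
      intro a; simp [Set.indicator_apply, hF, Set.mem_pi]
    have hmx : MeasurableSet {y : Fin D → ℝ | r < ∑ j, (x j - y j) ^ 2} :=
      measurableSet_lt (by fun_prop) (by fun_prop)
    simp_rw [e]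
    rw [lintegral_const_mul _ (measurable_one.indicator (MeasurableSet.univ_pi fun _ => hmx)),
      lintegral_indicator_one (MeasurableSet.univ_pi fun _ => hmx), Measure.pi_pi]
    simp [hw]
  have hw1 : ∀ x, w x ≤ 1 := fun x => pow_le_one₀ (by positivity) prob_le_one
  have hwint : ∫⁻ x, w x ∂P ≤ ENNReal.ofReal (Real.exp (-(ε * D)) + 2 * (gspKappa / (ε ^ 2 * D)) + Real.exp (-(n * Real.exp (-t)))) := by
    set B : Set (Fin D → ℝ) := {x | Q {y | ∑ j, (x j - y j) ^ 2 ≤ r} < ENNReal.ofReal (Real.exp (-t))} with hB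
    have hBm : MeasurableSet B := by
      have hS2 : MeasurableSet {p : (Fin D → ℝ) × (Fin D → ℝ) | ∑ j, (p.1 j - p.2 j) ^ 2 ≤ r} :=
        measurableSet_le (by fun_prop) (by fun_prop)
      exact measurableSet_lt (measurable_measure_prodMk_left hS2) measurable_const
    calc ∫⁻ x, w x ∂P ≤ ∫⁻ x, (B.indicator 1 x + ENNReal.ofReal (Real.exp (-(n * Real.exp (-t))))) ∂P := by
          refine lintegral_mono fun x => ?_
          by_cases hx : x ∈ B
          · rw [Set.indicator_of_mem hx]
            exact (hw1 x).trans le_self_add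
          · rw [Set.indicator_of_notMem hx, zero_add]
            have hx' : ENNReal.ofReal (Real.exp (-t)) ≤ Q {y | ∑ j, (x j - y j) ^ 2 ≤ r} := not_lt.1 hx
            have hmx : MeasurableSet {y : Fin D → ℝ | ∑ j, (x j - y j) ^ 2 ≤ r} :=
              measurableSet_le (by fun_prop) (by fun_prop)
            have hc : {y : Fin D → ℝ | r < ∑ j, (x j - y j) ^ 2} = {y : Fin D → ℝ | ∑ j, (x j - y j) ^ 2 ≤ r}ᶜ := by
              ext y; simp
            have h1 : Q {y | r < ∑ j, (x j - y j) ^ 2} ≤ ENNReal.ofReal (Real.exp (-Real.exp (-t))) := by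
              rw [hc, prob_compl_eq_one_sub hmx]
              calc _ ≤ 1 - ENNReal.ofReal (Real.exp (-t)) := by gcongr
                _ = ENNReal.ofReal (1 - Real.exp (-t)) := by
                  rw [ENNReal.ofReal_sub _ (Real.exp_pos _).le, ENNReal.ofReal_one]
                _ ≤ _ := by
                  refine ENNReal.ofReal_le_ofReal ?_
                  have := Real.add_one_le_exp (-Real.exp (-t)); linarith
            calc w x ≤ (ENNReal.ofReal (Real.exp (-Real.exp (-t)))) ^ n := by
                  simp only [hw]; gcongr
              _ = _ := by
                rw [← ENNReal.ofReal_pow (Real.exp_pos _).le, ← Real.exp_nat_mul]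
                congr 2; ring
      _ = P B + ENNReal.ofReal (Real.exp (-(n * Real.exp (-t)))) := by
          rw [lintegral_add_right _ measurable_const, lintegral_indicator_one hBm]
          simp
      _ ≤ _ := by
          rw [ENNReal.ofReal_add (p := Real.exp (-(ε * D)) + 2 * (gspKappa / (ε ^ 2 * D))) (by positivity) (by positivity)]
          gcongr
  have hbound : ∫⁻ x, ENNReal.ofReal (∑ j, x j ^ 2) * w x ∂P ≤
      ENNReal.ofReal (L * (δ * (D + gspKappa) + D / (4 * δ) *
          (Real.exp (-(ε * D)) + 2 * (gspKappa / (ε ^ 2 * D)) + Real.exp (-(n * Real.exp (-t)))))) := by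
    calc ∫⁻ x, ENNReal.ofReal (∑ j, x j ^ 2) * w x ∂P
        ≤ ∫⁻ x, ENNReal.ofReal L * (ENNReal.ofReal (δ / D * (∑ j, x j ^ 2 / s j) ^ 2) + ENNReal.ofReal (D / (4 * δ)) * w x) ∂P := by
          refine lintegral_mono fun x => ?_
          have hwr : w x = ENNReal.ofReal (w x).toReal :=
            (ENNReal.ofReal_toReal (ne_top_of_le_ne_top ENNReal.one_ne_top (hw1 x))).symm
          set z := (w x).toReal with hz
          have hz0 : 0 ≤ z := ENNReal.toReal_nonneg
          have hz1 : z ≤ 1 := by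
            have := ENNReal.toReal_mono ENNReal.one_ne_top (hw1 x)
            simpa using this
          set χ := ∑ j, x j ^ 2 / s j with hχ
          have hχ0 : 0 ≤ χ := Finset.sum_nonneg fun j _ => div_nonneg (sq_nonneg _) (hs0 j).le
          simp only []
          rw [hwr, ← ENNReal.ofReal_mul (Finset.sum_nonneg fun j _ => sq_nonneg _), ← ENNReal.ofReal_mul (by positivity),
            ← ENNReal.ofReal_add (by positivity) (by positivity), ← ENNReal.ofReal_mul hL0]
          refine ENNReal.ofReal_le_ofReal ?_
          have h1 : ∑ j, x j ^ 2 ≤ L * χ := by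
            rw [hχ, Finset.mul_sum]
            refine Finset.sum_le_sum fun j _ => ?_
            rw [mul_div_assoc', le_div_iff₀ (hs0 j), mul_comm]
            gcongr
            exact hL j
          have h2 : χ * z ≤ δ / D * χ ^ 2 + D / (4 * δ) * z := by
            have h3 : D / (4 * δ) * z ^ 2 ≤ D / (4 * δ) * z := by
              gcongr; nlinarith
            have h4 : δ / D * χ ^ 2 + D / (4 * δ) * z ^ 2 - χ * z = δ / D * (χ - D / (2 * δ) * z) ^ 2 := by
              field_simp; ring
            have h5 : 0 ≤ δ / D * (χ - D / (2 * δ) * z) ^ 2 := by positivity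
            linarith
          calc _ ≤ L * χ * z := by gcongr
            _ = L * (χ * z) := by ring
            _ ≤ _ := by gcongr
      _ = ENNReal.ofReal L * (∫⁻ x, ENNReal.ofReal (δ / D * (∑ j, x j ^ 2 / s j) ^ 2) ∂P + ENNReal.ofReal (D / (4 * δ)) * ∫⁻ x, w x ∂P) := by
          rw [lintegral_const_mul _ (by fun_prop), lintegral_add_left (by fun_prop), lintegral_const_mul _ hwm]
      _ ≤ ENNReal.ofReal L * (ENNReal.ofReal (δ * (D + gspKappa)) + ENNReal.ofReal (D / (4 * δ)) *
          ENNReal.ofReal (Real.exp (-(ε * D)) + 2 * (gspKappa / (ε ^ 2 * D)) + Real.exp (-(n * Real.exp (-t))))) := by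
          gcongr
          exact gsp_chi_lint hD s hs0 δ hδ
      _ = _ := by
          rw [← ENNReal.ofReal_mul (by positivity), ← ENNReal.ofReal_add (by positivity) (by positivity),
            ← ENNReal.ofReal_mul hL0]
  obtain ⟨a, ha⟩ := exists_le_lintegral (μ := Measure.pi fun _ : Fin n => Q)
    (f := fun a => ∫⁻ x, ENNReal.ofReal (∑ j, x j ^ 2) * F.indicator 1 (a, x) ∂P)
    (Measurable.lintegral_prod_right hGm).aemeasurable
  rw [havg] at ha
  have ha := ha.trans hbound
  refine ⟨insert 0 (Finset.univ.image a), Finset.insert_nonempty _ _, ?_, ?_⟩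
  · refine (Finset.card_insert_le _ _).trans ?_
    gcongr
    exact Finset.card_image_le.trans (by simp)
  · set C := insert 0 (Finset.univ.image a) with hC
    have hCne : C.Nonempty := Finset.insert_nonempty _ _
    set m : (Fin D → ℝ) → ℝ := fun x => C.inf' hCne (fun a => ∑ j, (x j - a j) ^ 2) with hm
    have hmc : Continuous m := Continuous.finset_inf'_apply _ fun i _ => by fun_prop
    have h0 : ∀ x, 0 ≤ m x := fun x => Finset.le_inf' _ _ fun a _ => Finset.sum_nonneg fun j _ => sq_nonneg _
    change ∫ x, m x ∂P ≤ _
    rw [integral_eq_lintegral_of_nonneg_ae (ae_of_all _ h0) hmc.aestronglyMeasurable]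
    refine ENNReal.toReal_le_of_le_ofReal (by positivity) ?_
    calc ∫⁻ x, ENNReal.ofReal (m x) ∂P ≤ ∫⁻ x, (ENNReal.ofReal r + ENNReal.ofReal (∑ j, x j ^ 2) * F.indicator 1 (a, x)) ∂P := by
          refine lintegral_mono fun x => ?_
          by_cases hx : (a, x) ∈ F
          · rw [Set.indicator_of_mem hx]
            refine le_trans ?_ le_add_self
            simp only [Pi.one_apply, mul_one]
            refine ENNReal.ofReal_le_ofReal ?_
            have := Finset.inf'_le (fun a : Fin D → ℝ => ∑ j, (x j - a j) ^ 2) (Finset.mem_insert_self 0 (Finset.univ.image a))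
            simpa using this
          · refine le_trans ?_ le_self_add
            refine ENNReal.ofReal_le_ofReal ?_
            simp only [hF, Set.mem_ofPred_eq, not_forall, not_lt] at hx
            obtain ⟨i, hi⟩ := hx
            refine le_trans (Finset.inf'_le (fun a : Fin D → ℝ => ∑ j, (x j - a j) ^ 2) (b := a i) ?_) hi
            simp [hC]
      _ = ENNReal.ofReal r + ∫⁻ x, ENNReal.ofReal (∑ j, x j ^ 2) * F.indicator 1 (a, x) ∂P := by
          rw [lintegral_add_left measurable_const]; simp
      _ ≤ _ := by
          rw [ENNReal.ofReal_add hr0 (by positivity)]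
          gcongr

noncomputable def gspTau (T : ℝ) (n : ℕ) (t : ℝ) : ℝ := (⌊t * (n + 1) / T⌋ : ℝ) * (T / (n + 1))

lemma gspTau_mem {T : ℝ} (hT : 0 < T) (n : ℕ) {t : ℝ} (ht : t ∈ Set.Icc 0 T) :
    gspTau T n t ∈ Set.Icc 0 T := by
  have hn : (0:ℝ) < n + 1 := by positivity
  unfold gspTau
  constructor
  · have : (0:ℤ) ≤ ⌊t * (n + 1) / T⌋ := Int.floor_nonneg.2 (div_nonneg (mul_nonneg ht.1 hn.le) hT.le)
    have h2 : (0:ℝ) ≤ (⌊t * (n + 1) / T⌋ : ℝ) := by exact_mod_cast this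
    positivity
  · have h := Int.floor_le (t * (n + 1) / T)
    calc (⌊t * (n + 1) / T⌋ : ℝ) * (T / (n + 1)) ≤ t * (n + 1) / T * (T / (n + 1)) := by gcongr
      _ = t := by field_simp
      _ ≤ T := ht.2

lemma gspTau_tendsto {T : ℝ} (hT : 0 < T) (t : ℝ) :
    Tendsto (fun n => gspTau T n t) atTop (nhds t) := by
  have h0 : Tendsto (fun n : ℕ => T / ((n:ℝ) + 1)) atTop (nhds 0) := by
    have := (tendsto_one_div_add_atTop_nhds_zero_nat (𝕜 := ℝ)).const_mul T
    simpa [div_eq_mul_inv] using this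
  have h1 : Tendsto (fun n : ℕ => t - T / ((n:ℝ) + 1)) atTop (nhds t) := by
    simpa using tendsto_const_nhds.sub h0
  refine tendsto_of_tendsto_of_tendsto_of_le_of_le h1 tendsto_const_nhds ?_ ?_
  · intro n
    have hn : (0:ℝ) < n + 1 := by positivity
    have h := (Int.sub_one_lt_floor (t * (n + 1) / T)).le
    show t - T / (n+1) ≤ gspTau T n t
    unfold gspTau
    calc t - T / (n+1) = (t * (n + 1) / T - 1) * (T / (n + 1)) := by field_simp
      _ ≤ _ := by gcongr
  · intro n
    have hn : (0:ℝ) < n + 1 := by positivity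
    have h := Int.floor_le (t * (n + 1) / T)
    show gspTau T n t ≤ t
    unfold gspTau
    calc (⌊t * (n + 1) / T⌋ : ℝ) * (T / (n + 1)) ≤ t * (n + 1) / T * (T / (n + 1)) := by gcongr
      _ = t := by field_simp

lemma gspTau_int {T : ℝ} (hT : 0 < T) (n : ℕ) (f : ℝ → ℝ) :
    IntervalIntegrable (fun t => f (gspTau T n t)) volume 0 T ∧
    ∫ t in (0:ℝ)..T, f (gspTau T n t) =
      ∑ i : Fin (n+1), T / (n + 1) * f (i * (T / (n+1))) := by
  have hn : (0:ℝ) < n + 1 := by positivity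
  set a : ℕ → ℝ := fun i => i * (T / (n+1)) with ha
  have hlt : ∀ i, a i < a (i+1) := by
    intro i; simp only [ha]; push_cast
    have : 0 < T / (n+1) := by positivity
    nlinarith
  have heq : ∀ i, Set.EqOn (fun t => f (gspTau T n t)) (fun _ => f (a i)) (Set.Ioo (a i) (a (i+1))) := by
    intro i t ht
    have : ⌊t * (n + 1) / T⌋ = (i : ℤ) := by
      rw [Int.floor_eq_iff]
      have h1 := ht.1; have h2 := ht.2
      simp only [ha] at h1 h2
      push_cast at h2 ⊢
      constructor
      · rw [le_div_iff₀ hT]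
        have := (mul_le_mul_of_nonneg_right h1.le hn.le)
        calc (i:ℝ) * T = i * (T/(n+1)) * (n+1) := by field_simp
          _ ≤ _ := this
      · rw [div_lt_iff₀ hT]
        have := (mul_lt_mul_of_pos_right h2 hn)
        calc _ < _ := this
          _ = (i+1) * T := by field_simp
    simp only [gspTau, this]
    simp [ha]
  have hae : ∀ i, (fun t => f (gspTau T n t)) =ᵐ[volume.restrict (Set.uIoc (a i) (a (i+1)))] (fun _ => f (a i)) := by
    intro i
    rw [Set.uIoc_of_le (hlt i).le, Measure.restrict_congr_set Ioo_ae_eq_Ioc.symm]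
    exact (ae_restrict_iff' measurableSet_Ioo).2 (ae_of_all _ fun t ht => heq i ht)
  have hii : ∀ i, IntervalIntegrable (fun t => f (gspTau T n t)) volume (a i) (a (i+1)) := by
    intro i
    exact (intervalIntegrable_const (c := f (a i))).congr_ae (hae i).symm
  have h0 : a 0 = 0 := by simp [ha]
  have h1 : a (n+1) = T := by simp only [ha]; push_cast; field_simp
  have hI := IntervalIntegrable.trans_iterate (n := n+1) (a := a) (μ := volume) (fun k _ => hii k)
  have hS := intervalIntegral.sum_integral_adjacent_intervals (n := n+1) (a := a) (μ := volume) (fun k _ => hii k)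
  rw [h0, h1] at hI hS
  refine ⟨hI, ?_⟩
  rw [← hS, ← Fin.sum_univ_eq_sum_range (fun k => ∫ t in (a k)..(a (k+1)), f (gspTau T n t))]
  refine Finset.sum_congr rfl fun i _ => ?_
  rw [intervalIntegral.integral_congr_ae_restrict (hae i), intervalIntegral.integral_const]
  simp only [ha, smul_eq_mul]; push_cast; ring

lemma gsp_riemann {T : ℝ} (hT : 0 < T) (f : ℝ → ℝ) (hf : ContinuousOn f (Set.Icc 0 T)) :
    Tendsto (fun n : ℕ => ∑ i : Fin (n+1), T / (n + 1) * f (i * (T / (n+1)))) atTop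
      (nhds (∫ t in (0:ℝ)..T, f t)) := by
  obtain ⟨C, hC⟩ := isCompact_Icc.exists_bound_of_continuousOn hf
  simp_rw [← fun n => (gspTau_int hT n f).2]
  have huI : Set.uIoc 0 T ⊆ Set.Icc 0 T := by
    rw [Set.uIoc_of_le hT.le]; exact Set.Ioc_subset_Icc_self
  refine intervalIntegral.tendsto_integral_filter_of_dominated_convergence (fun _ => C) ?_ ?_ ?_ ?_
  · exact Eventually.of_forall fun n => ((gspTau_int hT n f).1.def').aestronglyMeasurable
  · exact Eventually.of_forall fun n => ae_of_all _ fun t ht => hC _ (gspTau_mem hT n (huI ht))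
  · simp
  · refine ae_of_all _ fun t ht => ?_
    exact (hf t (huI ht)).tendsto.comp (tendsto_nhdsWithin_iff.2 ⟨gspTau_tendsto hT t,
      Eventually.of_forall fun n => gspTau_mem hT n (huI ht)⟩)

lemma gsp_riemann2 {T : ℝ} (hT : 0 < T) (f : ℝ → ℝ → ℝ) (hf : Continuous (Function.uncurry f)) :
    Tendsto (fun n : ℕ => ∑ i : Fin (n+1), ∑ j : Fin (n+1), T / (n + 1) * (T / (n+1)) *
      f (i * (T / (n+1))) (j * (T / (n+1)))) atTop
      (nhds (∫ t in (0:ℝ)..T, ∫ s in (0:ℝ)..T, f t s)) := by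
  obtain ⟨C, hC⟩ := (isCompact_Icc.prod isCompact_Icc :
    IsCompact (Set.Icc (0:ℝ) T ×ˢ Set.Icc (0:ℝ) T)).exists_bound_of_continuousOn hf.continuousOn
  have huI : Set.uIoc 0 T ⊆ Set.Icc 0 T := by
    rw [Set.uIoc_of_le hT.le]; exact Set.Ioc_subset_Icc_self
  have e : ∀ n : ℕ, ∑ i : Fin (n+1), ∑ j : Fin (n+1), T / ((n:ℝ) + 1) * (T / ((n:ℝ)+1)) *
      f (i * (T / (n+1))) (j * (T / (n+1))) =
      ∫ t in (0:ℝ)..T, ∫ s in (0:ℝ)..T, f (gspTau T n t) (gspTau T n s) := by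
    intro n
    rw [(gspTau_int hT n (fun t => ∫ s in (0:ℝ)..T, f t (gspTau T n s))).2]
    refine Finset.sum_congr rfl fun i _ => ?_
    rw [(gspTau_int hT n (fun s => f (i * (T / (n+1))) s)).2, Finset.mul_sum]
    refine Finset.sum_congr rfl fun j _ => ?_
    ring
  simp_rw [e]
  refine intervalIntegral.tendsto_integral_filter_of_dominated_convergence (fun _ => C * |T - 0|) ?_ ?_ ?_ ?_
  · exact Eventually.of_forall fun n =>
      ((gspTau_int hT n (fun t => ∫ s in (0:ℝ)..T, f t (gspTau T n s))).1.def').aestronglyMeasurable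
  · exact Eventually.of_forall fun n => ae_of_all _ fun t ht =>
      intervalIntegral.norm_integral_le_of_norm_le_const fun s hs =>
        hC (_, _) ⟨gspTau_mem hT n (huI ht), gspTau_mem hT n (huI hs)⟩
  · simp
  · refine ae_of_all _ fun t ht => ?_
    refine intervalIntegral.tendsto_integral_filter_of_dominated_convergence (fun _ => C) ?_ ?_ ?_ ?_
    · exact Eventually.of_forall fun n =>
        ((gspTau_int hT n (fun s => f (gspTau T n t) s)).1.def').aestronglyMeasurable
    · exact Eventually.of_forall fun n => ae_of_all _ fun s hs =>
        hC (_, _) ⟨gspTau_mem hT n (huI ht), gspTau_mem hT n (huI hs)⟩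
    · simp
    · refine ae_of_all _ fun s _ => ?_
      exact (hf.tendsto (t, s)).comp ((gspTau_tendsto hT t).prodMk_nhds (gspTau_tendsto hT s))

lemma gsp_gauss_limit {Ω : Type*} [MeasurableSpace Ω] (P : Measure Ω) [IsProbabilityMeasure P]
    (S : ℕ → Ω → ℝ) (Y : Ω → ℝ) (v : ℕ → ℝ) (w : ℝ) 
    (hS : ∀ n, P.map (S n) = gaussianReal 0 (v n).toNNReal)
    (hlim : ∀ᵐ ω ∂P, Tendsto (fun n => S n ω) atTop (nhds (Y ω)))
    (hv : Tendsto v atTop (nhds w)) :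
    AEMeasurable Y P ∧ P.map Y = gaussianReal 0 w.toNNReal := by
  have hSm : ∀ n, AEMeasurable (S n) P := by
    intro n
    apply AEMeasurable.of_map_ne_zero
    rw [hS n]; exact IsProbabilityMeasure.ne_zero _
  have hY : AEMeasurable Y P := aemeasurable_of_tendsto_metrizable_ae _ hSm hlim
  refine ⟨hY, ?_⟩
  have : IsProbabilityMeasure (P.map Y) := Measure.isProbabilityMeasure_map hY
  apply Measure.ext_of_charFun
  ext u
  have h1 : Tendsto (fun n => ∫ ω, Complex.exp (u * S n ω * Complex.I) ∂P) atTop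
      (nhds (∫ ω, Complex.exp (u * Y ω * Complex.I) ∂P)) := by
    refine tendsto_integral_of_dominated_convergence (fun _ => 1) ?_ (integrable_const _) ?_ ?_
    · intro n
      have := hSm n
      exact (by fun_prop : AEMeasurable (fun ω => Complex.exp (u * S n ω * Complex.I)) P).aestronglyMeasurable
    · intro n
      refine ae_of_all _ fun ω => ?_
      rw [← Complex.ofReal_mul, Complex.norm_exp_ofReal_mul_I]
    · filter_upwards [hlim] with ω hω
      have hc : Continuous (fun x : ℝ => Complex.exp (u * x * Complex.I)) := by fun_prop
      exact (hc.tendsto _).comp hω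
  have h2 : ∀ n, ∫ ω, Complex.exp (u * S n ω * Complex.I) ∂P = Complex.exp (-((v n).toNNReal : ℝ) * u^2/2) := by
    intro n
    have := charFun_gaussianReal (μ := 0) (v := (v n).toNNReal) u
    rw [← hS n, charFun_apply_real, integral_map (hSm n) (by fun_prop)] at this
    rw [this]; congr 1; push_cast; ring
  rw [charFun_gaussianReal, charFun_apply_real, integral_map hY (by fun_prop)]
  simp_rw [h2] at h1
  refine tendsto_nhds_unique h1 ?_
  have h3 : Tendsto (fun n => ((v n).toNNReal : ℝ)) atTop (nhds (w.toNNReal : ℝ)) :=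
    (NNReal.continuous_coe.tendsto _).comp ((continuous_real_toNNReal.tendsto w).comp hv)
  have hc : Continuous (fun x : ℝ => Complex.exp (-(x:ℂ) * u^2/2)) := by fun_prop
  have h4 := (hc.tendsto _).comp h3
  have e : Complex.exp (↑u * ↑(0:ℝ) * Complex.I - ↑↑w.toNNReal * ↑u ^ 2 / 2) =
      Complex.exp (-↑↑w.toNNReal * ↑u ^ 2 / 2) := by
    congr 1; push_cast; ring
  rw [e]
  exact h4

section
variable {Ω : Type*} [MeasurableSpace Ω] (P : Measure Ω) [IsProbabilityMeasure P]
    (T k : ℝ) (Z : ℝ → Ω → ℝ)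

/-- The Gaussian hypothesis. -/
def GspGauss : Prop := ∀ (m : ℕ) (t : Fin m → ℝ), (∀ i, t i ∈ Set.Icc 0 T) →
      ∀ c : Fin m → ℝ,
        Measure.map (fun ω => ∑ i, c i * Z (t i) ω) P =
          gaussianReal 0
            (∑ i, ∑ j, c i * c j * min (k + t i) (k + t j)).toNNReal

lemma gsp_grid_mem {T : ℝ} (hT : 0 < T) {n : ℕ} (i : Fin (n+1)) :
    (i:ℝ) * (T / (n+1)) ∈ Set.Icc 0 T := by
  constructor
  · positivity
  · have : (i:ℝ) ≤ n + 1 := by exact_mod_cast i.2.le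
    calc (i:ℝ) * (T / (n+1)) ≤ (n+1) * (T / (n+1)) := by gcongr
      _ = T := by field_simp

lemma gsp_F0 (hT : 0 < T) (hG : GspGauss P T k Z)
    (hcont : ∀ᵐ ω ∂P, ContinuousOn (fun t => Z t ω) (Set.Icc 0 T))
    (g : ℝ → ℝ) (hg : Continuous g) :
    AEMeasurable (fun ω => ∫ t in (0:ℝ)..T, Z t ω * g t) P ∧
    P.map (fun ω => ∫ t in (0:ℝ)..T, Z t ω * g t) =
      gaussianReal 0 (∫ t in (0:ℝ)..T, ∫ s in (0:ℝ)..T, g t * g s * min (k + t) (k + s)).toNNReal := by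
  refine gsp_gauss_limit P (fun n ω => ∑ i : Fin (n+1), (T/(n+1) * g (i * (T/(n+1)))) * Z (i * (T/(n+1))) ω) _
    _ _ (fun n => hG (n+1) (fun i => i * (T/(n+1))) (fun i => gsp_grid_mem hT i) (fun i => T/(n+1) * g (i * (T/(n+1))))) ?_ ?_
  · filter_upwards [hcont] with ω hω
    have := gsp_riemann hT (fun t => Z t ω * g t) (hω.mul hg.continuousOn)
    refine this.congr fun n => Finset.sum_congr rfl fun i _ => ?_
    ring
  · have := gsp_riemann2 hT (fun t s => g t * g s * min (k + t) (k + s)) (by fun_prop)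
    refine this.congr fun n => Finset.sum_congr rfl fun i _ => Finset.sum_congr rfl fun j _ => ?_
    ring

lemma gsp_sq_moment (hG : GspGauss P T k Z) (hk : 0 ≤ k) {t : ℝ} (ht : t ∈ Set.Icc 0 T) :
    AEMeasurable (Z t) P ∧ ∫⁻ ω, ENNReal.ofReal (Z t ω ^ 2) ∂P = ENNReal.ofReal (k + t) := by
  have h := hG 1 (fun _ => t) (fun _ => ht) (fun _ => 1)
  simp at h
  have hm : AEMeasurable (Z t) P := by
    apply AEMeasurable.of_map_ne_zero
    have : P.map (Z t) = gaussianReal 0 (k+t).toNNReal := h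
    rw [this]; exact IsProbabilityMeasure.ne_zero _
  refine ⟨hm, ?_⟩
  have : P.map (Z t) = gaussianReal 0 (k+t).toNNReal := h
  have hkt : 0 ≤ k + t := add_nonneg hk ht.1
  have e : ∫⁻ ω, ENNReal.ofReal (Z t ω ^ 2) ∂P = ∫⁻ x, ENNReal.ofReal (x ^ 2) ∂(P.map (Z t)) := by
    rw [lintegral_map' (by fun_prop) hm]
  rw [e, this]
  have hi : Integrable (fun x : ℝ => x^2) (gaussianReal 0 (k+t).toNNReal) :=
    (memLp_id_gaussianReal 2).integrable_sq
  rw [← ofReal_integral_eq_lintegral_ofReal hi (ae_of_all _ fun x => sq_nonneg x)]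
  congr 1
  have hv := variance_fun_id_gaussianReal (μ := 0) (v := (k+t).toNNReal)
  rw [variance_eq_integral (by fun_prop)] at hv
  simp at hv
  rw [hv, max_eq_left hkt]

lemma gsp_F3 (hT : 0 < T) (hG : GspGauss P T k Z) (hk : 0 ≤ k)
    (hcont : ∀ᵐ ω ∂P, ContinuousOn (fun t => Z t ω) (Set.Icc 0 T)) :
    ∫⁻ ω, ENNReal.ofReal (∫ t in (0:ℝ)..T, Z t ω ^ 2) ∂P ≤ ENNReal.ofReal (k * T + T^2/2) := by
  set R : ℕ → Ω → ENNReal := fun n ω => ∑ i : Fin (n+1), ENNReal.ofReal (T/(n+1)) * ENNReal.ofReal (Z (i * (T/(n+1))) ω ^ 2) with hR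
  have hm : ∀ n, AEMeasurable (R n) P := by
    intro n
    refine Finset.aemeasurable_fun_sum _ fun i _ => ?_
    have := (gsp_sq_moment P T k Z hG hk (gsp_grid_mem hT i)).1
    fun_prop
  have hlim : ∀ᵐ ω ∂P, ENNReal.ofReal (∫ t in (0:ℝ)..T, Z t ω ^ 2) = liminf (fun n => R n ω) atTop := by
    filter_upwards [hcont] with ω hω
    have := gsp_riemann hT (fun t => Z t ω ^2) (hω.pow 2)
    have h2 := (ENNReal.continuous_ofReal.tendsto _).comp this
    refine (Tendsto.liminf_eq (h2.congr fun n => ?_)).symm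
    simp only [Function.comp, hR]
    rw [ENNReal.ofReal_sum_of_nonneg (fun i _ => by positivity)]
    refine Finset.sum_congr rfl fun i _ => ?_
    rw [ENNReal.ofReal_mul (by positivity)]
  rw [lintegral_congr_ae hlim]
  refine (lintegral_liminf_le' hm).trans ?_
  refine liminf_le_of_le (by isBoundedDefault) ?_
  intro b hb
  obtain ⟨n, hn⟩ := hb.exists
  refine hn.trans ?_
  simp only [hR]
  rw [lintegral_finsetSum' _ (fun i _ => by
    have := (gsp_sq_moment P T k Z hG hk (gsp_grid_mem hT i)).1
    fun_prop)]
  have : ∀ i : Fin (n+1), ∫⁻ ω, ENNReal.ofReal (T/(n+1)) * ENNReal.ofReal (Z (i * (T/(n+1))) ω ^ 2) ∂P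
      = ENNReal.ofReal (T/(n+1) * (k + i * (T/(n+1)))) := by
    intro i
    have h := gsp_sq_moment P T k Z hG hk (gsp_grid_mem hT i)
    have := h.1
    rw [lintegral_const_mul'' _ (by fun_prop), h.2, ENNReal.ofReal_mul (by positivity)]
  simp_rw [this]
  rw [← ENNReal.ofReal_sum_of_nonneg (fun i _ => by positivity)]
  apply ENNReal.ofReal_le_ofReal
  rw [← Finset.mul_sum, Finset.sum_add_distrib, ← Finset.sum_mul]
  have hs : ∑ i : Fin (n+1), ((i:ℕ):ℝ) = n * (n+1) / 2 := by
    rw [Fin.sum_univ_eq_sum_range (fun i => (i:ℝ)), ← Nat.cast_sum]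
    have := Finset.sum_range_id_mul_two (n+1)
    have h2 : ((∑ i ∈ Finset.range (n+1), i : ℕ) : ℝ) * 2 = (n+1) * n := by exact_mod_cast this
    linarith
  rw [hs]
  simp only [Finset.sum_const, Finset.card_univ, Fintype.card_fin, nsmul_eq_mul]
  push_cast
  have hn : (0:ℝ) < n + 1 := by positivity
  have e : T / (n+1) * ((n+1) * k + n * (n+1)/2 * (T/(n+1))) = k * T + T^2/2 * (n / (n+1)) := by
    field_simp
  rw [e]
  have : (n:ℝ)/(n+1) ≤ 1 := by rw [div_le_one hn]; linarith
  nlinarith [sq_nonneg T]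
end

/-- Cosine basis. -/
noncomputable def gspH (T : ℝ) (j : ℕ) (t : ℝ) : ℝ :=
  (if j = 0 then √(1/T) else √(2/T)) * Real.cos (j * Real.pi / T * t)

lemma gspH_cont (T : ℝ) (j : ℕ) : Continuous (gspH T j) := by
  unfold gspH; fun_prop

lemma gsp_int_cos (T : ℝ) (hT : 0 < T) (m : ℤ) :
    ∫ t in (0:ℝ)..T, Real.cos (m * Real.pi / T * t) = if m = 0 then T else 0 := by
  split_ifs with h
  · subst h; simp
  · have hm : (m:ℝ) ≠ 0 := by exact_mod_cast h
    have hb : (m * Real.pi / T : ℝ) ≠ 0 := by have := Real.pi_ne_zero; positivity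
    rw [intervalIntegral.integral_comp_mul_left (fun x => Real.cos x) hb]
    rw [integral_cos]
    have : (m:ℝ) * Real.pi / T * T = m * Real.pi := by field_simp
    rw [this, Real.sin_int_mul_pi]; simp

lemma gspH_orth (T : ℝ) (hT : 0 < T) (i j : ℕ) :
    ∫ t in (0:ℝ)..T, gspH T i t * gspH T j t = if i = j then 1 else 0 := by
  have e : ∀ t, gspH T i t * gspH T j t =
      ((if i = 0 then √(1/T) else √(2/T)) * (if j = 0 then √(1/T) else √(2/T)) / 2) *
      (Real.cos (((i:ℤ) - (j:ℤ) : ℤ) * Real.pi / T * t) + Real.cos (((i:ℤ) + (j:ℤ) : ℤ) * Real.pi / T * t)) := by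
    intro t
    unfold gspH
    have h1 : ((((i:ℤ) - (j:ℤ) : ℤ) : ℝ) * Real.pi / T * t) = i * Real.pi / T * t - j * Real.pi / T * t := by
      push_cast; ring
    have h2 : ((((i:ℤ) + (j:ℤ) : ℤ) : ℝ) * Real.pi / T * t) = i * Real.pi / T * t + j * Real.pi / T * t := by
      push_cast; ring
    rw [h1, h2, Real.cos_sub, Real.cos_add]; ring
  simp_rw [e]
  rw [intervalIntegral.integral_const_mul, intervalIntegral.integral_add (by apply Continuous.intervalIntegrable; fun_prop) (by apply Continuous.intervalIntegrable; fun_prop),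
    gsp_int_cos T hT, gsp_int_cos T hT]
  have s1 : √(1/T) * √(1/T) = 1/T := Real.mul_self_sqrt (by positivity)
  have s2 : √(2/T) * √(2/T) = 2/T := Real.mul_self_sqrt (by positivity)
  by_cases hij : i = j
  · subst hij
    by_cases hi : i = 0
    · subst hi; simp only [if_true]; rw [s1]; simp; field_simp; norm_num
    · have : ¬ ((i:ℤ) + i = 0) := by omega
      simp only [hi, if_false, if_true, sub_self, this]; rw [s2]; field_simp; norm_num
  · have h1 : ¬ ((i:ℤ) - j = 0) := by omega
    have h2 : ¬ ((i:ℤ) + j = 0) := by omega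
    simp [h1, h2, hij]

lemma gspH_cov (T k : ℝ) (hT : 0 < T) (j : ℕ) (hj : 1 ≤ j) {t : ℝ} (ht : t ∈ Set.Icc 0 T) :
    ∫ s in (0:ℝ)..T, gspH T j s * min (k + t) (k + s) =
      (T^2/Real.pi^2/(j:ℝ)^2) * (gspH T j t - gspH T j 0) := by
  have hj0 : (j:ℝ) ≠ 0 := by positivity
  have hpi := Real.pi_ne_zero
  set a : ℝ := j * Real.pi / T with ha
  have ha0 : a ≠ 0 := by positivity
  have hc : Continuous fun s => gspH T j s * min (k + t) (k + s) := by
    have := gspH_cont T j; fun_prop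
  have hj1 : j ≠ 0 := by omega
  rw [← intervalIntegral.integral_add_adjacent_intervals (b := t) (hc.intervalIntegrable _ _) (hc.intervalIntegrable _ _)]
  have e1 : ∫ s in (0:ℝ)..t, gspH T j s * min (k + t) (k + s) =
      ∫ s in (0:ℝ)..t, √(2/T) * ((k + s) * Real.cos (a * s)) := by
    apply intervalIntegral.integral_congr
    intro s hs
    rw [Set.uIcc_of_le ht.1] at hs
    simp only [gspH, hj1, if_false]
    rw [min_eq_right (by linarith [hs.2])]; ring
  have e2 : ∫ s in t..T, gspH T j s * min (k + t) (k + s) =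
      ∫ s in t..T, √(2/T) * ((k + t) * Real.cos (a * s)) := by
    apply intervalIntegral.integral_congr
    intro s hs
    rw [Set.uIcc_of_le ht.2] at hs
    simp only [gspH, hj1, if_false]
    rw [min_eq_left (by linarith [hs.1])]; ring
  have d1 : ∫ s in (0:ℝ)..t, √(2/T) * ((k + s) * Real.cos (a * s)) =
      √(2/T) * ((k+t) * Real.sin (a * t) / a + Real.cos (a * t) / a^2) - √(2/T) * ((k+0) * Real.sin (a * 0) / a + Real.cos (a * 0) / a^2) := by
    apply intervalIntegral.integral_eq_sub_of_hasDerivAt (f := fun s => √(2/T) * ((k+s) * Real.sin (a * s) / a + Real.cos (a * s) / a^2))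
    · intro s _
      have h1 : HasDerivAt (fun s => a * s) a s := by simpa using (hasDerivAt_id s).const_mul a
      have h2 : HasDerivAt (fun s => k + s) 1 s := by simpa using (hasDerivAt_id s).const_add k
      have := (((h2.mul h1.sin).div_const a).add (h1.cos.div_const (a^2))).const_mul √(2/T)
      refine this.congr_deriv ?_
      field_simp
      ring
    · apply Continuous.intervalIntegrable; fun_prop
  have d2 : ∫ s in t..T, √(2/T) * ((k + t) * Real.cos (a * s)) =
      √(2/T) * ((k+t) * Real.sin (a * T) / a) - √(2/T) * ((k+t) * Real.sin (a * t) / a) := by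
    apply intervalIntegral.integral_eq_sub_of_hasDerivAt (f := fun s => √(2/T) * ((k+t) * Real.sin (a * s) / a))
    · intro s _
      have h1 : HasDerivAt (fun s => a * s) a s := by simpa using (hasDerivAt_id s).const_mul a
      have := ((h1.sin.const_mul (k+t)).div_const a).const_mul √(2/T)
      refine this.congr_deriv ?_
      field_simp
    · apply Continuous.intervalIntegrable; fun_prop
  have hsT : Real.sin (a * T) = 0 := by
    have : a * T = j * Real.pi := by rw [ha]; field_simp
    rw [this, Real.sin_nat_mul_pi]
  rw [e1, e2, d1, d2, hsT]
  have hl : T^2/Real.pi^2/(j:ℝ)^2 = 1 / a^2 := by rw [ha]; field_simp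
  rw [hl]
  simp only [gspH, hj1, if_false, ← ha]
  simp
  field_simp
  ring

lemma gspH_int (T : ℝ) (hT : 0 < T) (j : ℕ) (hj : 1 ≤ j) : ∫ t in (0:ℝ)..T, gspH T j t = 0 := by
  unfold gspH
  rw [intervalIntegral.integral_const_mul]
  have := gsp_int_cos T hT j
  have h : (j:ℤ) ≠ 0 := by omega
  simp only [h, if_false] at this
  push_cast at this
  rw [this, mul_zero]

lemma gspH_var (T k : ℝ) (hT : 0 < T) (p N : ℕ) (hp : 1 ≤ p) (u : Fin N → ℝ) :
    ∫ t in (0:ℝ)..T, ∫ s in (0:ℝ)..T, (∑ i, u i * gspH T (p+i) t) * (∑ i, u i * gspH T (p+i) s) * min (k + t) (k + s)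
     = ∑ i, u i ^ 2 * (T^2/Real.pi^2/((p+i : ℕ):ℝ)^2) := by
  have hH := gspH_cont T
  have e1 : ∀ t ∈ Set.uIcc 0 T, ∫ s in (0:ℝ)..T, (∑ i, u i * gspH T (p+i) t) * (∑ i, u i * gspH T (p+i) s) * min (k + t) (k + s)
     = ∑ i, ∑ j, (u j * u i * (T^2/Real.pi^2/((p+i : ℕ):ℝ)^2)) * (gspH T (p+j) t * gspH T (p+i) t - gspH T (p+i) 0 * gspH T (p+j) t) := by
    intro t ht
    rw [Set.uIcc_of_le hT.le] at ht
    have : ∀ s, (∑ i, u i * gspH T (p+i) t) * (∑ i, u i * gspH T (p+i) s) * min (k + t) (k + s)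
      = ∑ i, ((∑ j, u j * gspH T (p+j) t) * u i) * (gspH T (p+i) s * min (k+t) (k+s)) := by
      intro s
      rw [Finset.mul_sum, Finset.sum_mul]
      refine Finset.sum_congr rfl fun i _ => ?_
      ring
    simp_rw [this]
    rw [intervalIntegral.integral_finsetSum (fun i _ => by
      have := hH (p+i)
      apply Continuous.intervalIntegrable; fun_prop)]
    refine Finset.sum_congr rfl fun i _ => ?_
    rw [intervalIntegral.integral_const_mul, gspH_cov T k hT (p+i) (by omega) ht, Finset.sum_mul, Finset.sum_mul]
    refine Finset.sum_congr rfl fun j _ => ?_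
    ring
  rw [intervalIntegral.integral_congr e1]
  rw [intervalIntegral.integral_finsetSum (fun i _ => by
      have := hH
      apply Continuous.intervalIntegrable; fun_prop)]
  refine Finset.sum_congr rfl fun i _ => ?_
  rw [intervalIntegral.integral_finsetSum (fun j _ => by
      have := hH
      apply Continuous.intervalIntegrable; fun_prop)]
  have : ∀ j : Fin N, ∫ t in (0:ℝ)..T, (u j * u i * (T^2/Real.pi^2/((p+i : ℕ):ℝ)^2)) * (gspH T (p+j) t * gspH T (p+i) t - gspH T (p+i) 0 * gspH T (p+j) t)
     = if j = i then u i ^ 2 * (T^2/Real.pi^2/((p+i : ℕ):ℝ)^2) else 0 := by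
    intro j
    have := hH
    rw [intervalIntegral.integral_const_mul, intervalIntegral.integral_sub
      (by apply Continuous.intervalIntegrable; fun_prop) (by apply Continuous.intervalIntegrable; fun_prop),
      intervalIntegral.integral_const_mul, gspH_orth T hT, gspH_int T hT (p+j) (by omega)]
    by_cases h : j = i
    · subst h; rw [if_pos rfl, if_pos rfl]; ring
    · have : ¬ (p + (j:ℕ) = p + i) := fun h' => h (Fin.ext (by omega))
      rw [if_neg this, if_neg h]; ring
  simp_rw [this]
  simp

lemma gspH_var0 (T k : ℝ) (hT : 0 < T) :
    ∫ t in (0:ℝ)..T, ∫ s in (0:ℝ)..T, gspH T 0 t * gspH T 0 s * min (k + t) (k + s)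
     = k * T + T^2/3 := by
  have s1 : √(1/T) * √(1/T) = 1/T := Real.mul_self_sqrt (by positivity)
  have e1 : ∀ t ∈ Set.uIcc 0 T, ∫ s in (0:ℝ)..T, gspH T 0 t * gspH T 0 s * min (k + t) (k + s)
     = 1/T * (k * T + t * T - t^2/2) := by
    intro t ht
    rw [Set.uIcc_of_le hT.le] at ht
    have : ∀ s, gspH T 0 t * gspH T 0 s * min (k + t) (k + s) = 1/T * min (k+t) (k+s) := by
      intro s; simp only [gspH, if_true]; rw [← s1]; simp
    simp_rw [this]
    rw [intervalIntegral.integral_const_mul]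
    have hc : Continuous fun s => min (k + t) (k + s) := by fun_prop
    rw [← intervalIntegral.integral_add_adjacent_intervals (b := t) (hc.intervalIntegrable _ _) (hc.intervalIntegrable _ _)]
    have e1 : ∫ s in (0:ℝ)..t, min (k + t) (k + s) = ∫ s in (0:ℝ)..t, (k + s) := by
      apply intervalIntegral.integral_congr
      intro s hs
      rw [Set.uIcc_of_le ht.1] at hs
      exact min_eq_right (by linarith [hs.2])
    have e2 : ∫ s in t..T, min (k + t) (k + s) = ∫ s in t..T, (k + t) := by
      apply intervalIntegral.integral_congr
      intro s hs
      rw [Set.uIcc_of_le ht.2] at hs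
      exact min_eq_left (by linarith [hs.1])
    rw [e1, e2, intervalIntegral.integral_add (by simp) (by simp)]
    simp
    left; ring
  rw [intervalIntegral.integral_congr e1, intervalIntegral.integral_const_mul,
    intervalIntegral.integral_sub (by apply Continuous.intervalIntegrable; fun_prop) (by apply Continuous.intervalIntegrable; fun_prop),
    intervalIntegral.integral_add (by apply Continuous.intervalIntegrable; fun_prop) (by apply Continuous.intervalIntegrable; fun_prop)]
  simp
  field_simp
  ring

lemma gsp_indep {Ω : Type*} [MeasurableSpace Ω] (P : Measure Ω) [IsProbabilityMeasure P] {N : ℕ}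
    (Y : Fin N → Ω → ℝ) (hY : ∀ i, AEMeasurable (Y i) P) (v : Fin N → ℝ) (hv : ∀ i, 0 ≤ v i)
    (h : ∀ u : Fin N → ℝ, P.map (fun ω => ∑ i, u i * Y i ω) = gaussianReal 0 (∑ i, u i ^ 2 * v i).toNNReal) :
    P.map (fun ω i => Y i ω) = Measure.pi (fun i => gaussianReal 0 (v i).toNNReal) := by
  have hYm : AEMeasurable (fun ω i => Y i ω) P := aemeasurable_pi_lambda _ hY
  have : IsProbabilityMeasure (P.map (fun ω i => Y i ω)) := Measure.isProbabilityMeasure_map hYm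
  refine charFun_eq_pi_iff.1 fun z => ?_
  rw [charFun_apply, integral_map (by fun_prop) (by fun_prop), integral_map hYm (by fun_prop)]
  have h1 : ∀ ω, Complex.exp (inner ℝ (WithLp.toLp 2 (fun i => Y i ω)) z * Complex.I) =
      Complex.exp ((1:ℝ) * (∑ i, z i * Y i ω : ℝ) * Complex.I) := by
    intro ω
    simp [PiLp.inner_apply]
  simp_rw [h1]
  have hs : AEMeasurable (fun ω => ∑ i, z i * Y i ω) P := by fun_prop
  have h2 := charFun_gaussianReal (μ := 0) (v := (∑ i, z i ^ 2 * v i).toNNReal) 1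
  rw [← h, charFun_apply_real, integral_map hs (by fun_prop)] at h2
  rw [h2]
  simp_rw [charFun_gaussianReal]
  rw [← Complex.exp_sum]
  congr 1
  have h3 : 0 ≤ ∑ i, z i ^ 2 * v i := Finset.sum_nonneg fun i _ => mul_nonneg (sq_nonneg _) (hv i)
  have h4 : (((∑ i, z i ^ 2 * v i).toNNReal : ℝ) : ℂ) = ∑ i, (z i : ℂ) ^ 2 * (v i : ℂ) := by
    rw [Real.coe_toNNReal _ h3]; push_cast; rfl
  have h5 : ∀ i, (((v i).toNNReal : ℝ) : ℂ) = v i := fun i => by rw [Real.coe_toNNReal _ (hv i)]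
  rw [h4]
  simp_rw [h5]
  simp [Finset.sum_div]
  exact Finset.sum_congr rfl fun i _ => by ring

section
variable {Ω : Type*} [MeasurableSpace Ω] (P : Measure Ω) [IsProbabilityMeasure P]
    (T k : ℝ) (Z : ℝ → Ω → ℝ)

lemma gsp_xi_map (hT : 0 < T) (hG : GspGauss P T k Z)
    (hcont : ∀ᵐ ω ∂P, ContinuousOn (fun t => Z t ω) (Set.Icc 0 T)) (p N : ℕ) (hp : 1 ≤ p) (r : ℝ) :
    P.map (fun ω (i : Fin N) => r * ∫ t in (0:ℝ)..T, Z t ω * gspH T (p+i) t) =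
      Measure.pi (fun i : Fin N => gaussianReal 0 (r^2 * (T^2/Real.pi^2/((p+i : ℕ):ℝ)^2)).toNNReal) := by
  refine gsp_indep P (fun i ω => r * ∫ t in (0:ℝ)..T, Z t ω * gspH T (p+i) t) ?_ _ (fun i => by positivity) ?_
  · intro i
    have := (gsp_F0 P T k Z hT hG hcont (gspH T (p+i)) (gspH_cont T _)).1
    fun_prop
  · intro u
    have hH := gspH_cont T
    have hF := (gsp_F0 P T k Z hT hG hcont (fun t => ∑ i : Fin N, (u i * r) * gspH T (p+i) t) (by fun_prop)).2
    rw [gspH_var T k hT p N hp (fun i => u i * r)] at hF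
    have e : (∑ i : Fin N, (u i * r) ^ 2 * (T^2/Real.pi^2/((p+i : ℕ):ℝ)^2)) = ∑ i : Fin N, u i ^ 2 * (r^2 * (T^2/Real.pi^2/((p+i : ℕ):ℝ)^2)) :=
      Finset.sum_congr rfl fun i _ => by ring
    rw [← e, ← hF]
    apply Measure.map_congr
    filter_upwards [hcont] with ω hω
    have : ∀ t, Z t ω * ∑ i : Fin N, (u i * r) * gspH T (p+i) t = ∑ i : Fin N, (u i * r) * (Z t ω * gspH T (p+i) t) := by
      intro t; rw [Finset.mul_sum]; exact Finset.sum_congr rfl fun i _ => by ring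
    simp_rw [this]
    rw [intervalIntegral.integral_finsetSum (fun i _ => by
      apply ContinuousOn.intervalIntegrable
      rw [Set.uIcc_of_le hT.le]
      have := (hH (p+i)).continuousOn (s := Set.Icc 0 T)
      fun_prop)]
    refine Finset.sum_congr rfl fun i _ => ?_
    rw [intervalIntegral.integral_const_mul]; ring

/-- All the facts about the process that are used. -/
def GspFacts {H : Type*} [NormedAddCommGroup H] [InnerProductSpace ℝ H] (X : Ω → H) (e : ℕ → H) (c v0 : ℝ) : Prop :=
  Orthonormal ℝ e ∧ (∀ j, AEMeasurable (fun ω => inner ℝ (e j) (X ω)) P) ∧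
  (∀ (p N : ℕ), 1 ≤ p → ∀ r : ℝ, P.map (fun ω (i : Fin N) => r * inner ℝ (e (p+i)) (X ω)) =
    Measure.pi (fun i : Fin N => gaussianReal 0 (r^2 * (c/((p+i : ℕ):ℝ)^2)).toNNReal)) ∧
  P.map (fun ω => inner ℝ (e 0) (X ω)) = gaussianReal 0 v0.toNNReal ∧
  Integrable (fun ω => ‖X ω‖^2) P ∧ ∫ ω, ‖X ω‖^2 ∂P ≤ v0 + c * (Real.pi^2/6)

lemma gsp_facts (hT : 0 < T) (hk : 0 ≤ k) (hG : GspGauss P T k Z)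
    (hcont : ∀ᵐ ω ∂P, ContinuousOn (fun t => Z t ω) (Set.Icc 0 T))
    (X : Ω → Lp ℝ 2 (volume.restrict (Set.Icc 0 T)))
    (hXmeas : AEStronglyMeasurable X P)
    (hXZ : ∀ᵐ ω ∂P,
      (X ω : ℝ → ℝ) =ᵐ[volume.restrict (Set.Icc 0 T)] fun t => Z t ω) :
    ∃ e, GspFacts P X e (T^2/Real.pi^2) (k * T + T^2/3) := by
  have hmem : ∀ j, MemLp (gspH T j) 2 (volume.restrict (Set.Icc 0 T)) := by
    intro j
    rw [memLp_two_iff_integrable_sq (gspH_cont T j).aestronglyMeasurable]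
    exact (((gspH_cont T j).pow 2).continuousOn).integrableOn_compact isCompact_Icc
  set e : ℕ → Lp ℝ 2 (volume.restrict (Set.Icc 0 T)) := fun j => (hmem j).toLp (gspH T j) with he
  have hin : ∀ j (ω : Ω), (X ω : ℝ → ℝ) =ᵐ[volume.restrict (Set.Icc 0 T)] (fun t => Z t ω) →
      inner ℝ (e j) (X ω) = ∫ t in (0:ℝ)..T, Z t ω * gspH T j t := by
    intro j ω h
    rw [L2.inner_def, intervalIntegral.integral_of_le hT.le, ← integral_Icc_eq_integral_Ioc]
    apply integral_congr_ae
    filter_upwards [(hmem j).coeFn_toLp, h] with t h1 h2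
    simp [he, h1, h2]
  have hinae : ∀ᵐ ω ∂P, ∀ j, inner ℝ (e j) (X ω) = ∫ t in (0:ℝ)..T, Z t ω * gspH T j t := by
    filter_upwards [hXZ] with ω hω j using hin j ω hω
  have hn : ∀ᵐ ω ∂P, ‖X ω‖^2 = ∫ t in (0:ℝ)..T, Z t ω ^ 2 := by
    filter_upwards [hXZ] with ω hω
    rw [← real_inner_self_eq_norm_sq, L2.inner_def, intervalIntegral.integral_of_le hT.le, ← integral_Icc_eq_integral_Ioc]
    apply integral_congr_ae
    filter_upwards [hω] with t h2
    simp [h2, sq]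
  have hF3 := gsp_F3 P T k Z hT hG hk hcont
  have hlin : ∫⁻ ω, ENNReal.ofReal (‖X ω‖^2) ∂P ≤ ENNReal.ofReal (k * T + T^2/2) := by
    refine le_trans (le_of_eq (lintegral_congr_ae ?_)) hF3
    filter_upwards [hn] with ω h; rw [h]
  have hnm : AEStronglyMeasurable (fun ω => ‖X ω‖^2) P := hXmeas.norm.pow 2
  refine ⟨e, ?_, ?_, ?_, ?_, ?_, ?_⟩
  · rw [orthonormal_iff_ite]
    intro i j
    rw [L2.inner_def, ← gspH_orth T hT i j, intervalIntegral.integral_of_le hT.le, ← integral_Icc_eq_integral_Ioc]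
    apply integral_congr_ae
    filter_upwards [(hmem j).coeFn_toLp, (hmem i).coeFn_toLp] with t h1 h2
    simp [he, h1, h2, mul_comm]
  · intro j
    refine (gsp_F0 P T k Z hT hG hcont (gspH T j) (gspH_cont T _)).1.congr ?_
    filter_upwards [hinae] with ω h using (h j).symm
  · intro p N hp r
    rw [← gsp_xi_map P T k Z hT hG hcont p N hp r]
    apply Measure.map_congr
    filter_upwards [hinae] with ω h
    ext i; rw [h]
  · rw [← gspH_var0 T k hT, ← (gsp_F0 P T k Z hT hG hcont (gspH T 0) (gspH_cont T _)).2]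
    apply Measure.map_congr
    filter_upwards [hinae] with ω h using h 0
  · refine ⟨hnm, ?_⟩
    rw [hasFiniteIntegral_iff_ofReal (ae_of_all _ fun ω => by positivity)]
    exact hlin.trans_lt ENNReal.ofReal_lt_top
  · rw [integral_eq_lintegral_of_nonneg_ae (ae_of_all _ fun ω => by positivity) hnm]
    have e1 : k * T + T^2/3 + T^2/Real.pi^2 * (Real.pi^2/6) = k * T + T^2/2 := by
      have := Real.pi_ne_zero
      field_simp; ring
    rw [e1]
    exact ENNReal.toReal_le_of_le_ofReal (by positivity) hlin
end

lemma gsp_inf_integrable {Ω ι : Type*} [MeasurableSpace Ω] (P : Measure Ω) (α : Finset ι) (hα : α.Nonempty)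
    (F : ι → Ω → ℝ) (hF : ∀ a ∈ α, Integrable (F a) P) :
    Integrable (fun ω => α.inf' hα (fun a => F a ω)) P := by
  have h : Integrable (α.inf' hα F) P := Finset.inf'_induction hα F
    (p := fun f => Integrable f P) (fun f hf g hg => hf.inf hg) hF
  convert h using 1
  ext ω
  rw [Finset.inf'_apply]

lemma gsp_norm_integrable {Ω H : Type*} [MeasurableSpace Ω] (P : Measure Ω) [IsProbabilityMeasure P]
    [NormedAddCommGroup H] (X : Ω → H) (hX : AEStronglyMeasurable X P)
    (hi : Integrable (fun ω => ‖X ω‖^2) P) (a : H) : Integrable (fun ω => ‖X ω - a‖^2) P := by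
  have h : MemLp X 2 P := (memLp_two_iff_integrable_sq_norm hX).2 hi
  exact (memLp_two_iff_integrable_sq_norm (hX.sub aestronglyMeasurable_const)).1 (h.sub (memLp_const a))

lemma gsp_lower_gen {Ω H : Type*} [MeasurableSpace Ω] (P : Measure Ω) [IsProbabilityMeasure P]
    [NormedAddCommGroup H] [InnerProductSpace ℝ H] (X : Ω → H) (e : ℕ → H) (c v0 : ℝ) (hc : 0 < c)
    (hX : AEStronglyMeasurable X P) (hF : GspFacts P X e c v0) (α : Finset H) (hα : α.Nonempty)
    (n : ℕ) (hn : α.card ≤ n) (N : ℕ) (θ : ℝ) (hθ : 0 < θ) :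
    θ * (∑ j : Fin N, (Real.log (max (c/((1+j : ℕ):ℝ)^2) θ / θ) + (c/((1+j : ℕ):ℝ)^2) / max (c/((1+j : ℕ):ℝ)^2) θ) - 2 * Real.log n)
      ≤ ∫ ω, α.inf' hα (fun a => ‖X ω - a‖ ^ 2) ∂P := by
  obtain ⟨ho, hm, hmap, -, hi, -⟩ := hF
  have h1 := gsp_lower_pi (fun j : Fin N => c/((1+j : ℕ):ℝ)^2) (fun j => by positivity) θ hθ α hα
    (fun a j => inner ℝ (e (1+j)) a) n hn
  refine h1.trans ?_
  have hmp := hmap 1 N le_rfl 1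
  simp only [one_pow, one_mul] at hmp
  rw [← hmp, integral_map (aemeasurable_pi_lambda _ fun i => hm _)]
  · refine integral_mono_of_nonneg (ae_of_all _ fun ω => ?_) (gsp_inf_integrable P α hα _ fun a _ => gsp_norm_integrable P X hX hi a)
      (ae_of_all _ fun ω => ?_)
    · exact Finset.le_inf' _ _ fun a _ => Finset.sum_nonneg fun j _ => sq_nonneg _
    · refine Finset.le_inf' _ _ fun a ha => (Finset.inf'_le _ ha).trans ?_
      have ho' : Orthonormal ℝ (fun i : Fin N => e (1+i)) :=
        ho.comp (fun i : Fin N => 1 + (i:ℕ)) (fun i j h => Fin.ext (by simpa using h))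
      have := ho'.sum_inner_products_le (s := Finset.univ) (X ω - a)
      refine le_trans (le_of_eq ?_) this
      refine Finset.sum_congr rfl fun j _ => ?_
      rw [inner_sub_right, Real.norm_eq_abs, sq_abs]
  · have : Measurable (fun x : Fin N → ℝ => α.inf' hα (fun a => ∑ j, (x j - inner ℝ (e (1+j)) a)^2)) := by
      have h : Measurable (α.inf' hα (fun a (x : Fin N → ℝ) => ∑ j, (x j - inner ℝ (e (1+j)) a)^2)) :=
        Finset.inf'_induction hα _ (p := fun f => Measurable f) (fun f hf g hg => hf.inf hg) (fun a _ => by fun_prop)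
      convert h using 1
      ext ω
      rw [Finset.inf'_apply]
    exact this.aestronglyMeasurable

lemma gsp_sum_log (d : ℕ) (hd : 1 ≤ d) :
    ∑ j ∈ Finset.range d, Real.log ((d:ℝ) / (1+j : ℕ)) = d * Real.log d - Real.log (d.factorial) := by
  have : ∀ m : ℕ, ∑ j ∈ Finset.range m, Real.log ((d:ℝ) / (1+j : ℕ)) = m * Real.log d - Real.log (m.factorial) := by
    intro m
    induction m with
    | zero => simp
    | succ m ih =>
      rw [Finset.sum_range_succ, ih, Nat.factorial_succ]
      push_cast
      rw [Real.log_div (by positivity) (by positivity), Real.log_mul (by positivity) (by positivity), add_comm (1:ℝ)]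
      ring
  exact this d

lemma gsp_tail_lower (d M : ℕ) :
    1/((d:ℝ)+1) - 1/((d:ℝ)+M+1) ≤ ∑ x ∈ Finset.range M, 1/((1 + (d + x) : ℕ):ℝ)^2 := by
  induction M with
  | zero => simp
  | succ M ih =>
    rw [Finset.sum_range_succ]
    push_cast at ih ⊢
    have h : 1/((d:ℝ)+M+1) - 1/((d:ℝ)+(M+1)+1) ≤ 1/(1+((d:ℝ)+M))^2 := by
      rw [div_sub_div _ _ (by positivity) (by positivity), div_le_div_iff₀ (by positivity) (by positivity)]
      have : (0:ℝ) ≤ d + M := by positivity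
      nlinarith
    linarith

lemma gsp_lower_det {Ω H : Type*} [MeasurableSpace Ω] (P : Measure Ω) [IsProbabilityMeasure P]
    [NormedAddCommGroup H] [InnerProductSpace ℝ H] (X : Ω → H) (e : ℕ → H) (c v0 : ℝ) (hc : 0 < c)
    (hX : AEStronglyMeasurable X P) (hF : GspFacts P X e c v0) (α : Finset H) (hα : α.Nonempty)
    (n : ℕ) (hn : α.card ≤ n) (d M : ℕ) (hd : 1 ≤ d) (hdn : Real.log n ≤ d * Real.log d - Real.log (d.factorial)) :
    c * (1/(d:ℝ) + 1/((d:ℝ)+1) - 1/((d:ℝ)+M+1)) ≤ ∫ ω, α.inf' hα (fun a => ‖X ω - a‖ ^ 2) ∂P := by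
  have hd0 : (0:ℝ) < d := by exact_mod_cast hd
  refine le_trans ?_ (gsp_lower_gen P X e c v0 hc hX hF α hα n hn (d+M) (c/(d:ℝ)^2) (by positivity))
  rw [Fin.sum_univ_eq_sum_range (fun j => (Real.log (max (c/((1+j : ℕ):ℝ)^2) (c/(d:ℝ)^2) / (c/(d:ℝ)^2)) + (c/((1+j : ℕ):ℝ)^2) / max (c/((1+j : ℕ):ℝ)^2) (c/(d:ℝ)^2))),
    Finset.sum_range_add]
  have e1 : ∑ j ∈ Finset.range d, (Real.log (max (c/((1+j : ℕ):ℝ)^2) (c/(d:ℝ)^2) / (c/(d:ℝ)^2)) + (c/((1+j : ℕ):ℝ)^2) / max (c/((1+j : ℕ):ℝ)^2) (c/(d:ℝ)^2))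
      = 2 * (d * Real.log d - Real.log (d.factorial)) + d := by
    rw [← gsp_sum_log d hd, Finset.mul_sum]
    have : (d:ℝ) = ∑ j ∈ Finset.range d, (1:ℝ) := by simp
    conv_rhs => rw [add_comm]; arg 1; rw [this]
    rw [← Finset.sum_add_distrib]
    refine Finset.sum_congr rfl fun j hj => ?_
    have hj' : ((1 + j : ℕ):ℝ) ≤ d := by
      have := Finset.mem_range.1 hj
      exact_mod_cast (by omega : 1 + j ≤ d)
    have hj0 : (0:ℝ) < ((1 + j : ℕ):ℝ) := by positivity
    rw [max_eq_left (by gcongr)]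
    have e2 : c/((1+j : ℕ):ℝ)^2 / (c/(d:ℝ)^2) = ((d:ℝ) / (1+j : ℕ))^2 := by field_simp
    rw [e2, Real.log_pow, div_self (by positivity)]
    push_cast; ring
  have e2 : (d:ℝ)^2 * (1/((d:ℝ)+1) - 1/((d:ℝ)+M+1)) ≤ ∑ x ∈ Finset.range M, (Real.log (max (c/((1+(d+x) : ℕ):ℝ)^2) (c/(d:ℝ)^2) / (c/(d:ℝ)^2)) + (c/((1+(d+x) : ℕ):ℝ)^2) / max (c/((1+(d+x) : ℕ):ℝ)^2) (c/(d:ℝ)^2)) := by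
    refine (mul_le_mul_of_nonneg_left (gsp_tail_lower d M) (sq_nonneg _)).trans ?_
    rw [Finset.mul_sum]
    refine Finset.sum_le_sum fun j hj => ?_
    have hj' : (d:ℝ) ≤ ((1 + (d+j) : ℕ):ℝ) := by
      exact_mod_cast (by omega : d ≤ 1 + (d+j))
    have hj0 : (0:ℝ) < ((1 + (d+j) : ℕ):ℝ) := by positivity
    rw [max_eq_right (by gcongr), div_self (by positivity), Real.log_one]
    apply le_of_eq; field_simp; ring
  rw [e1]
  have hE : c * (1/(d:ℝ) + 1/((d:ℝ)+1) - 1/((d:ℝ)+M+1)) = c/(d:ℝ)^2 * (d + (d:ℝ)^2 * (1/((d:ℝ)+1) - 1/((d:ℝ)+M+1))) := by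
    field_simp
    ring
  rw [hE]
  apply mul_le_mul_of_nonneg_left _ (by positivity)
  linarith

lemma gsp_stirling (d : ℕ) (hd : 1 ≤ d) :
    (d:ℝ) - 1 - Real.log d / 2 ≤ d * Real.log d - Real.log (d.factorial) := by
  obtain ⟨m, rfl⟩ : ∃ m, d = m + 1 := ⟨d-1, by omega⟩
  have h := Stirling.stirlingSeq'_antitone (Nat.zero_le m)
  simp only [Function.comp] at h
  have h1 := Stirling.stirlingSeq_one
  have h0 : Stirling.stirlingSeq (Nat.succ 0) = Real.exp 1 / √2 := h1
  rw [h0] at h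
  have hp : 0 < Stirling.stirlingSeq (m+1) := Stirling.stirlingSeq'_pos m
  have h2 := Real.log_le_log hp h
  rw [Real.log_div (by positivity) (by positivity), Real.log_exp, Real.log_sqrt (by positivity)] at h2
  have h3 : Real.log (Stirling.stirlingSeq (m+1)) = Real.log ((m+1).factorial) - Real.log (2 * (m+1:ℕ))/2 - (m+1:ℕ) * (Real.log (m+1:ℕ) - 1) := by
    rw [Stirling.stirlingSeq, Real.log_div (by positivity) (by positivity), Real.log_mul (by positivity) (by positivity),
      Real.log_sqrt (by positivity), Real.log_pow, Real.log_div (by positivity) (by positivity), Real.log_exp]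
    ring
  rw [h3, Real.log_mul (by positivity) (by positivity)] at h2
  linarith

lemma gsp_quantErr_lower {Ω H : Type*} [MeasurableSpace Ω] (P : Measure Ω) [IsProbabilityMeasure P]
    [NormedAddCommGroup H] [InnerProductSpace ℝ H] (X : Ω → H) (e : ℕ → H) (c v0 : ℝ) (hc : 0 < c)
    (hX : AEStronglyMeasurable X P) (hF : GspFacts P X e c v0) (n : ℕ) (hn : 1 ≤ n) :
    √(c * (2/(√(Real.log n)+2)^2 - 1/(√(Real.log n)+1)^4)) ≤ quantErr P X n := by
  set x := √(Real.log n) with hx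
  have hx0 : 0 ≤ x := Real.sqrt_nonneg _
  have hl : Real.log n = x^2 := (Real.sq_sqrt (Real.log_natCast_nonneg n)).symm
  set d : ℕ := ⌈(x+1)^2⌉₊ with hd
  have hd1 : (x+1)^2 ≤ d := Nat.le_ceil _
  have hd2 : (d:ℝ) < (x+1)^2 + 1 := Nat.ceil_lt_add_one (by positivity)
  have hdpos : (0:ℝ) < d := by nlinarith
  have hdn1 : 1 ≤ d := by exact_mod_cast hdpos
  have hs : x + 1 ≤ √(d:ℝ) := Real.le_sqrt_of_sq_le hd1
  have hss : √(d:ℝ) ^ 2 = d := Real.sq_sqrt hdpos.le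
  have hlog : Real.log d / 2 ≤ √(d:ℝ) - 1 := by
    have := Real.log_le_sub_one_of_pos (Real.sqrt_pos.2 hdpos)
    rw [Real.log_sqrt hdpos.le] at this
    exact this
  have hcond : Real.log n ≤ d * Real.log d - Real.log (d.factorial) := by
    refine le_trans ?_ (gsp_stirling d hdn1)
    rw [hl]; nlinarith
  unfold quantErr
  apply le_csInf
  · exact ⟨_, {0}, Finset.singleton_nonempty 0, by simpa using hn, rfl⟩
  · rintro r ⟨α, hα, hcard, rfl⟩
    apply Real.sqrt_le_sqrt
    refine le_trans ?_ (gsp_lower_det P X e c v0 hc hX hF α hα n hcard d (d^2) hdn1 hcond)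
    apply mul_le_mul_of_nonneg_left _ hc.le
    have h1 : 1/(x+2)^2 ≤ 1/(d:ℝ) := one_div_le_one_div_of_le hdpos (by nlinarith)
    have h2 : 1/(x+2)^2 ≤ 1/((d:ℝ)+1) := one_div_le_one_div_of_le (by positivity) (by nlinarith)
    have h3 : 1/((d:ℝ)+(d^2:ℕ)+1) ≤ 1/(x+1)^4 := by
      apply one_div_le_one_div_of_le (by positivity)
      push_cast
      nlinarith [mul_self_le_mul_self (by positivity : 0 ≤ (x+1)^2) hd1]
    have h4 : 2/(x+2)^2 = 1/(x+2)^2 + 1/(x+2)^2 := by ring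
    rw [h4]; linarith

lemma gsp_sqrt_log_tendsto : Tendsto (fun n : ℕ => √(Real.log n)) atTop atTop :=
  Real.tendsto_sqrt_atTop.comp (Real.tendsto_log_atTop.comp tendsto_natCast_atTop_atTop)

lemma gsp_lower_lim (c : ℝ) :
    Tendsto (fun n : ℕ => √(Real.log n) * √(c * (2/(√(Real.log n)+2)^2 - 1/(√(Real.log n)+1)^4))) atTop
      (nhds √(2*c)) := by
  have h1 : Tendsto (fun x : ℝ => √(c * (2*((1 + 2 * x⁻¹)^2)⁻¹ - (x⁻¹)^2 * ((1 + x⁻¹)^4)⁻¹))) atTop (nhds √(2*c)) := by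
    have hi := tendsto_inv_atTop_zero (𝕜 := ℝ)
    have hc : ContinuousAt (fun y : ℝ => √(c * (2*((1 + 2 * y)^2)⁻¹ - y^2 * ((1 + y)^4)⁻¹))) 0 := by
      apply ContinuousAt.sqrt
      apply ContinuousAt.mul continuousAt_const
      apply ContinuousAt.sub
      · exact continuousAt_const.mul (ContinuousAt.inv₀ (by fun_prop) (by norm_num))
      · exact ContinuousAt.mul (by fun_prop) (ContinuousAt.inv₀ (by fun_prop) (by norm_num))
    have := hc.tendsto.comp hi
    simpa [Function.comp_def, mul_comm c] using this
  have h2 := h1.comp gsp_sqrt_log_tendsto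
  refine h2.congr' ?_
  filter_upwards [gsp_sqrt_log_tendsto.eventually_gt_atTop 0] with n hn
  simp only [Function.comp]
  set x := √(Real.log n)
  have : x * √(c * (2 / (x + 2) ^ 2 - 1 / (x + 1) ^ 4)) = √(x^2 * (c * (2 / (x + 2) ^ 2 - 1 / (x + 1) ^ 4))) := by
    rw [Real.sqrt_mul (sq_nonneg x), Real.sqrt_sq hn.le]
  rw [this]
  congr 1
  field_simp
  try ring

/-- Scalar grid. -/
noncomputable def gspGrid (M : ℕ) : Finset ℝ :=
  (Finset.Icc (-((M:ℤ)^2)) ((M:ℤ)^2)).image (fun i : ℤ => (i:ℝ) / M)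

lemma gspGrid_card (M : ℕ) : (gspGrid M).card ≤ 2 * M^2 + 1 := by
  refine Finset.card_image_le.trans ?_
  rw [Int.card_Icc]
  apply Int.toNat_le.2
  push_cast
  linarith

lemma gspGrid_near (M : ℕ) (hM : 1 ≤ M) (x : ℝ) : ∃ g ∈ gspGrid M, (x - g)^2 ≤ (1 + x^4) / (M:ℝ)^2 := by
  have hM0 : (0:ℝ) < M := by exact_mod_cast hM
  by_cases hx : |x| ≤ M
  · rw [abs_le] at hx
    refine ⟨(⌊x * M⌋ : ℝ) / M, ?_, ?_⟩
    · refine Finset.mem_image.2 ⟨⌊x * M⌋, ?_, rfl⟩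
      rw [Finset.mem_Icc]
      constructor
      · rw [Int.le_floor]; push_cast; nlinarith
      · have h1 : (⌊x * M⌋ : ℝ) ≤ (M:ℝ)^2 := (Int.floor_le _).trans (by nlinarith)
        exact_mod_cast h1
    · have h1 := Int.floor_le (x * M)
      have h2 := Int.lt_floor_add_one (x * M)
      have e : x - (⌊x * M⌋ : ℝ) / M = (x * M - ⌊x * M⌋) / M := by field_simp
      rw [e, div_pow]
      apply div_le_div_of_nonneg_right _ (by positivity)
      have : 0 ≤ x^4 := by positivity
      nlinarith
  · push Not at hx
    refine ⟨0, Finset.mem_image.2 ⟨0, by simp, by simp⟩, ?_⟩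
    rw [sub_zero, le_div_iff₀ (by positivity)]
    have h1 : (M:ℝ)^2 ≤ x^2 := by
      rw [← sq_abs x]; gcongr
    nlinarith [sq_nonneg x]

lemma gsp_moments {Ω : Type*} [MeasurableSpace Ω] (P : Measure Ω) (Y : Ω → ℝ) (hY : AEMeasurable Y P)
    (v : ℝ) (hv : 0 ≤ v) (h : P.map Y = gaussianReal 0 v.toNNReal) :
    (Integrable (fun ω => Y ω ^ 2) P ∧ ∫ ω, Y ω ^ 2 ∂P = v) ∧
    (Integrable (fun ω => Y ω ^ 4) P ∧ ∫ ω, Y ω ^ 4 ∂P = v^2 * gspKappa) := by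
  have h2 := gsp_integral_sq_gauss v hv
  have hs : gaussianReal 0 v.toNNReal = (gaussianReal 0 1).map (fun x => √v * x) := by
    rw [gaussianReal_map_const_mul]
    congr 1
    · simp
    · ext; simp [Real.sq_sqrt hv, hv]
  have e4 : ∀ x : ℝ, (√v * x)^4 = v^2 * x^4 := by
    intro x
    rw [mul_pow, show √v ^ 4 = (√v^2)^2 by ring, Real.sq_sqrt hv]
  have h4 : Integrable (fun x : ℝ => x^4) (gaussianReal 0 v.toNNReal) ∧ ∫ x, x^4 ∂(gaussianReal 0 v.toNNReal) = v^2 * gspKappa := by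
    rw [hs]
    constructor
    · rw [integrable_map_measure (by fun_prop) (by fun_prop)]
      simp only [Function.comp_def, e4]
      exact gsp_int_four.const_mul _
    · rw [integral_map (by fun_prop) (by fun_prop)]
      simp only [e4]
      rw [integral_const_mul, gspKappa]
  rw [← h] at h2 h4
  refine ⟨⟨?_, ?_⟩, ?_, ?_⟩
  · have := h2.1; rwa [integrable_map_measure (by fun_prop) hY] at this
  · have := h2.2; rwa [integral_map hY (by fun_prop)] at this
  · have := h4.1; rwa [integrable_map_measure (by fun_prop) hY] at this
  · have := h4.2; rwa [integral_map hY (by fun_prop)] at this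

lemma gsp_xi_moments {Ω H : Type*} [MeasurableSpace Ω] (P : Measure Ω) [IsProbabilityMeasure P]
    [NormedAddCommGroup H] [InnerProductSpace ℝ H] (X : Ω → H) (e : ℕ → H) (c v0 : ℝ) (hc : 0 < c) (hv0 : 0 ≤ v0)
    (hF : GspFacts P X e c v0) (j : ℕ) :
    (Integrable (fun ω => inner ℝ (e j) (X ω) ^ 2) P ∧ ∫ ω, inner ℝ (e j) (X ω) ^ 2 ∂P = if j = 0 then v0 else c/(j:ℝ)^2) ∧
    (Integrable (fun ω => inner ℝ (e j) (X ω) ^ 4) P ∧ ∫ ω, inner ℝ (e j) (X ω) ^ 4 ∂P ≤ (v0 + c)^2 * gspKappa) := by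
  obtain ⟨ho, hm, hmap, h0, hi, -⟩ := hF
  have hk := gspKappa_nonneg
  by_cases hj : j = 0
  · subst hj
    have := gsp_moments P _ (hm 0) v0 hv0 h0
    refine ⟨by simpa using this.1, this.2.1, this.2.2.le.trans ?_⟩
    gcongr; linarith
  · have hj1 : 1 ≤ j := by omega
    have hj' : (1:ℝ) ≤ j := by exact_mod_cast hj1
    have h1 := hmap j 1 hj1 1
    have h2 : P.map (fun ω => inner ℝ (e j) (X ω)) = gaussianReal 0 (c/(j:ℝ)^2).toNNReal := by
      have h3 := (measurePreserving_eval (fun i : Fin 1 => gaussianReal 0 ((1:ℝ)^2 * (c/((j+i : ℕ):ℝ)^2)).toNNReal) 0).map_eq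
      rw [← h1, AEMeasurable.map_map_of_aemeasurable (measurable_pi_apply 0).aemeasurable
        (aemeasurable_pi_lambda _ fun i => (hm _).const_mul _)] at h3
      simpa [Function.comp_def] using h3
    have := gsp_moments P _ (hm j) (c/(j:ℝ)^2) (by positivity) h2
    refine ⟨by simpa [hj] using this.1, this.2.1, this.2.2.le.trans ?_⟩
    have : c/(j:ℝ)^2 ≤ c := div_le_self hc.le (by nlinarith)
    gcongr; linarith

lemma gsp_norm_decomp {H : Type*} [NormedAddCommGroup H] [InnerProductSpace ℝ H] {N : ℕ} (e : Fin N → H)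
    (ho : Orthonormal ℝ e) (x : H) (b : Fin N → ℝ) :
    ‖x - ∑ i, b i • e i‖^2 = (‖x‖^2 - ∑ i, inner ℝ (e i) x ^ 2) + ∑ i, (inner ℝ (e i) x - b i)^2 := by
  rw [norm_sub_sq_real]
  have h1 : inner ℝ x (∑ i, b i • e i) = ∑ i, b i * inner ℝ (e i) x := by
    rw [inner_sum]
    refine Finset.sum_congr rfl fun i _ => ?_
    rw [real_inner_smul_right, real_inner_comm]
  have h2 : ‖∑ i, b i • e i‖^2 = ∑ i, b i ^ 2 := by
    rw [← real_inner_self_eq_norm_sq, ho.inner_sum]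
    simp [sq]
  rw [h1, h2, Finset.mul_sum]
  have h3 : ∑ i, (inner ℝ (e i) x - b i)^2 = ∑ i, inner ℝ (e i) x ^ 2 - ∑ i, 2 * (b i * inner ℝ (e i) x) + ∑ i, b i ^ 2 := by
    rw [← Finset.sum_sub_distrib, ← Finset.sum_add_distrib]
    exact Finset.sum_congr rfl fun i _ => by ring
  rw [h3]; ring

lemma gsp_zeta_tail (d : ℕ) : Real.pi^2/6 - ∑ j ∈ Finset.range (d+1), 1/((1+j : ℕ):ℝ)^2 ≤ 1/((d:ℝ)+1) := by
  have hz := hasSum_zeta_two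
  have h1 : Tendsto (fun d : ℕ => ∑ j ∈ Finset.range (d+1), 1/((1+j : ℕ):ℝ)^2) atTop (nhds (Real.pi^2/6)) := by
    have := (hz.tendsto_sum_nat).comp (tendsto_add_atTop_nat 2)
    refine this.congr fun d => ?_
    simp only [Function.comp]
    rw [Finset.sum_range_succ']
    simp [add_comm]
  have h2 : Tendsto (fun d : ℕ => ∑ j ∈ Finset.range (d+1), 1/((1+j : ℕ):ℝ)^2 + 1/((d:ℝ)+1)) atTop (nhds (Real.pi^2/6)) := by
    simpa using h1.add tendsto_one_div_add_atTop_nhds_zero_nat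
  have h3 : Antitone (fun d : ℕ => ∑ j ∈ Finset.range (d+1), 1/((1+j : ℕ):ℝ)^2 + 1/((d:ℝ)+1)) := by
    apply antitone_nat_of_succ_le
    intro d
    rw [Finset.sum_range_succ _ (d+1)]
    push_cast
    have : 1/(1+((d:ℝ)+1))^2 + 1/((d:ℝ)+1+1) ≤ 1/((d:ℝ)+1) := by
      rw [div_add_div _ _ (by positivity) (by positivity), div_le_div_iff₀ (by positivity) (by positivity)]
      have : (0:ℝ) ≤ d := by positivity
      nlinarith [mul_nonneg this this]
    linarith
  have := h3.le_of_tendsto h2 d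
  linarith

lemma gsp_upper_det {Ω H : Type*} [MeasurableSpace Ω] (P : Measure Ω) [IsProbabilityMeasure P]
    [NormedAddCommGroup H] [InnerProductSpace ℝ H] (X : Ω → H) (e : ℕ → H) (c v0 : ℝ) (hc : 0 < c) (hv0 : 0 ≤ v0)
    (hX : AEStronglyMeasurable X P) (hF : GspFacts P X e c v0) (Q D M : ℕ) (hQ : 1 ≤ Q) (hD : 1 ≤ D) (hM : 1 ≤ M)
    (r : ℝ) (hr : 0 < r) (C : Finset (Fin D → ℝ)) (hC : C.Nonempty) :
    ∃ α : Finset H, ∃ hα : α.Nonempty, α.card ≤ (2 * M^2 + 1)^Q * C.card ∧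
      ∫ ω, α.inf' hα (fun a => ‖X ω - a‖ ^ 2) ∂P ≤
        Q * ((1 + (v0 + c)^2 * gspKappa) / (M:ℝ)^2) +
        (1/r^2) * ∫ x, C.inf' hC (fun a => ∑ j, (x j - a j)^2) ∂(gspG (fun i : Fin D => r^2 * (c/((Q+i : ℕ):ℝ)^2)))
        + c * (1/((Q:ℝ) + D - 1)) := by
  classical
  have hxi := gsp_xi_moments P X e c v0 hc hv0 hF
  obtain ⟨ho, hm, hmap, h0, hi, hnorm⟩ := hF
  set E : Fin (Q + D) → H := fun i => e i with hE
  have hoE : Orthonormal ℝ E := ho.comp (fun i : Fin (Q+D) => (i:ℕ)) Fin.val_injective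
  set Φ : (Fin Q → ℝ) × (Fin D → ℝ) → H := fun p => ∑ i, Fin.append p.1 (fun j => p.2 j / r) i • E i with hΦ
  set B : Finset (Fin Q → ℝ) := Fintype.piFinset (fun _ => gspGrid M) with hB
  have hgne : (gspGrid M).Nonempty := by
    obtain ⟨g, hg, -⟩ := gspGrid_near M hM 0
    exact ⟨g, hg⟩
  have hBne : B.Nonempty := Fintype.piFinset_nonempty.2 fun _ => hgne
  have hne : ((B ×ˢ C).image Φ).Nonempty := (hBne.product hC).image _
  have hr2 : 0 < r^2 := by positivity
  have hpt : ∀ ω, ((B ×ˢ C).image Φ).inf' hne (fun a => ‖X ω - a‖^2) ≤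
      (∑ j : Fin Q, (1 + inner ℝ (e j) (X ω)^4) / (M:ℝ)^2) +
      (1/r^2) * C.inf' hC (fun a => ∑ j : Fin D, (r * inner ℝ (e (Q+j)) (X ω) - a j)^2) +
      (‖X ω‖^2 - ∑ i : Fin (Q + D), inner ℝ (e i) (X ω)^2) := by
    intro ω
    choose b hbm hb using fun j : Fin Q => gspGrid_near M hM (inner ℝ (e j) (X ω))
    obtain ⟨a, ha, hae⟩ := Finset.exists_mem_eq_inf' hC (fun a => ∑ j : Fin D, (r * inner ℝ (e (Q+j)) (X ω) - a j)^2)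
    have hmem : Φ (b, a) ∈ (B ×ˢ C).image Φ :=
      Finset.mem_image_of_mem _ (Finset.mk_mem_product (Fintype.mem_piFinset.2 hbm) ha)
    refine (Finset.inf'_le _ hmem).trans ?_
    rw [hae, hΦ]
    simp only
    rw [gsp_norm_decomp E hoE, Fin.sum_univ_add (fun i => (inner ℝ (E i) (X ω) - Fin.append b (fun j => a j / r) i)^2)]
    simp only [Fin.append_left, Fin.append_right, hE, Fin.val_castAdd, Fin.val_natAdd]
    have h1 : ∑ j : Fin Q, (inner ℝ (e j) (X ω) - b j)^2 ≤ ∑ j : Fin Q, (1 + inner ℝ (e j) (X ω)^4) / (M:ℝ)^2 :=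
      Finset.sum_le_sum fun j _ => hb j
    have h2 : ∑ j : Fin D, (inner ℝ (e (Q+j)) (X ω) - a j / r)^2 = 1/r^2 * ∑ j : Fin D, (r * inner ℝ (e (Q+j)) (X ω) - a j)^2 := by
      rw [Finset.mul_sum]
      refine Finset.sum_congr rfl fun j _ => ?_
      field_simp
    rw [h2]
    linarith
  have hI1 : Integrable (fun ω => ∑ j : Fin Q, (1 + inner ℝ (e j) (X ω)^4) / (M:ℝ)^2) P :=
    integrable_finsetSum _ fun j _ => (((integrable_const _).add (hxi j).2.1).div_const _)
  have hLp : ∀ j, MemLp (fun ω => inner ℝ (e j) (X ω)) 2 P := fun j =>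
    (memLp_two_iff_integrable_sq (hm j).aestronglyMeasurable).2 (hxi j).1.1
  have hI2 : Integrable (fun ω => C.inf' hC (fun a => ∑ j : Fin D, (r * inner ℝ (e (Q+j)) (X ω) - a j)^2)) P := by
    refine gsp_inf_integrable P C hC (fun a ω => ∑ j : Fin D, (r * inner ℝ (e (Q+j)) (X ω) - a j)^2) fun a _ =>
      integrable_finsetSum _ fun j _ => ?_
    exact (((hLp (Q+j)).const_mul r).sub (memLp_const (a j))).integrable_sq
  have hI3 : Integrable (fun ω => ‖X ω‖^2 - ∑ i : Fin (Q + D), inner ℝ (e i) (X ω)^2) P :=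
    hi.sub (integrable_finsetSum _ fun j _ => (hxi j).1.1)
  refine ⟨(B ×ˢ C).image Φ, hne, ?_, ?_⟩
  · refine Finset.card_image_le.trans ?_
    rw [Finset.card_product]
    apply Nat.mul_le_mul_right
    rw [hB, Fintype.card_piFinset]
    simp only [Finset.prod_const, Finset.card_univ, Fintype.card_fin]
    exact Nat.pow_le_pow_left (gspGrid_card M) Q
  · have hle := integral_mono (gsp_inf_integrable P ((B ×ˢ C).image Φ) hne (fun a ω => ‖X ω - a‖^2)
      fun a _ => gsp_norm_integrable P X hX hi a) ((hI1.add (hI2.const_mul (1/r^2))).add hI3) hpt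
    refine hle.trans ?_
    rw [integral_add' (hI1.add (hI2.const_mul (1/r^2))) hI3, integral_add' hI1 (hI2.const_mul (1/r^2)), integral_const_mul]
    have e1 : ∫ ω, ∑ j : Fin Q, (1 + inner ℝ (e j) (X ω)^4) / (M:ℝ)^2 ∂P ≤ Q * ((1 + (v0 + c)^2 * gspKappa) / (M:ℝ)^2) := by
      have hint : ∀ j ∈ (Finset.univ : Finset (Fin Q)), Integrable (fun ω => (1 + inner ℝ (e j) (X ω)^4) / (M:ℝ)^2) P :=
        fun j _ => (((integrable_const _).add (hxi j).2.1).div_const _)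
      rw [integral_finsetSum _ hint]
      calc _ ≤ ∑ j : Fin Q, ((1 + (v0 + c)^2 * gspKappa) / (M:ℝ)^2) := by
            refine Finset.sum_le_sum fun j _ => ?_
            rw [integral_div, integral_add (integrable_const _) (hxi j).2.1]
            simp only [integral_const, probReal_univ, smul_eq_mul, one_mul]
            have := (hxi j).2.2
            gcongr
        _ = _ := by simp
    have e2 : ∫ ω, C.inf' hC (fun a => ∑ j : Fin D, (r * inner ℝ (e (Q+j)) (X ω) - a j)^2) ∂P =
        ∫ x, C.inf' hC (fun a => ∑ j, (x j - a j)^2) ∂(gspG (fun i : Fin D => r^2 * (c/((Q+i : ℕ):ℝ)^2))) := by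
      rw [gspG, ← hmap Q D hQ r, integral_map (aemeasurable_pi_lambda _ fun i => (hm _).const_mul _)]
      have : Measurable (fun x : Fin D → ℝ => C.inf' hC (fun a => ∑ j, (x j - a j)^2)) := by
        have h : Measurable (C.inf' hC (fun a (x : Fin D → ℝ) => ∑ j, (x j - a j)^2)) :=
          Finset.inf'_induction hC _ (p := fun f => Measurable f) (fun f hf g hg => hf.inf hg) (fun a _ => by fun_prop)
        convert h using 1
        ext ω
        rw [Finset.inf'_apply]
      exact this.aestronglyMeasurable
    have e3 : ∫ ω, (‖X ω‖^2 - ∑ i : Fin (Q + D), inner ℝ (e i) (X ω)^2) ∂P ≤ c * (1/((Q:ℝ) + D - 1)) := by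
      have hint : ∀ j ∈ (Finset.univ : Finset (Fin (Q+D))), Integrable (fun ω => inner ℝ (e j) (X ω)^2) P :=
        fun j _ => (hxi j).1.1
      rw [integral_sub hi (integrable_finsetSum _ hint), integral_finsetSum _ hint]
      simp_rw [fun j => (hxi j).1.2]
      rw [Fin.sum_univ_eq_sum_range (fun j => if j = 0 then v0 else c/(j:ℝ)^2)]
      obtain ⟨d, hd⟩ : ∃ d, Q + D = d + 2 := ⟨Q + D - 2, by omega⟩
      have hd' : (Q:ℝ) + D = d + 2 := by exact_mod_cast hd
      rw [hd, hd', Finset.sum_range_succ']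
      have hz := gsp_zeta_tail d
      have e4 : ∑ k ∈ Finset.range (d+1), (if k + 1 = 0 then v0 else c/((k+1:ℕ):ℝ)^2) = c * ∑ j ∈ Finset.range (d+1), 1/((1+j : ℕ):ℝ)^2 := by
        rw [Finset.mul_sum]
        refine Finset.sum_congr rfl fun j _ => ?_
        rw [if_neg (by omega), add_comm j 1]; ring
      rw [e4]
      simp only [if_true]
      have := mul_le_mul_of_nonneg_left hz hc.le
      have e5 : (d:ℝ) + 2 - 1 = d + 1 := by ring
      rw [e5]
      linarith
    rw [e2]
    linarith

lemma gsp_fact_le (d : ℕ) (hd : 1 ≤ d) : d * Real.log d - Real.log (d.factorial) ≤ d := by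
  have hd0 : (0:ℝ) < d := by exact_mod_cast hd
  have h := Real.pow_div_factorial_le_exp (d:ℝ) hd0.le d
  have h2 := Real.log_le_log (by positivity) h
  rw [Real.log_exp, Real.log_div (by positivity) (by positivity), Real.log_pow] at h2
  exact h2

lemma gsp_fine_sum (Q D d : ℕ) (hQ : 1 ≤ Q) (hd : 1 ≤ d) (hQD : Q + D = d + 1) :
    ∑ i : Fin D, Real.log ((d:ℝ) / (Q+i : ℕ)) ≤ d := by
  refine le_trans ?_ (gsp_fact_le d hd)
  rw [← gsp_sum_log d hd, Fin.sum_univ_eq_sum_range (fun i => Real.log ((d:ℝ) / (Q+i : ℕ)))]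
  have : d = (Q - 1) + D := by omega
  have e : ∑ j ∈ Finset.range d, Real.log ((d:ℝ) / (1+j : ℕ)) = ∑ j ∈ Finset.range ((Q-1) + D), Real.log ((d:ℝ) / (1+j : ℕ)) := by
    rw [← this]
  rw [e, Finset.sum_range_add]
  have h1 : ∀ x, 1 + (Q - 1 + x) = Q + x := fun x => by omega
  simp only [h1]
  have : 0 ≤ ∑ j ∈ Finset.range (Q-1), Real.log ((d:ℝ) / (1+j : ℕ)) := by
    refine Finset.sum_nonneg fun j hj => Real.log_nonneg ?_
    have := Finset.mem_range.1 hj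
    rw [le_div_iff₀ (by positivity), one_mul]
    exact_mod_cast (by omega : 1 + j ≤ d)
  linarith

lemma gsp_ev_log (ε : ℝ) (hε : 0 < ε) : ∀ᶠ q : ℕ in atTop, Real.log 9 + 10 * Real.log q ≤ ε * q := by
  have h1 := Real.isLittleO_log_id_atTop.bound (c := ε/20) (by positivity)
  have h2 := tendsto_natCast_atTop_atTop (R := ℝ) |>.eventually h1
  have h3 := tendsto_natCast_atTop_atTop (R := ℝ) |>.eventually (eventually_ge_atTop (2 * Real.log 9 / ε))
  filter_upwards [h2, h3] with q h2 h3
  rw [div_le_iff₀ hε] at h3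
  simp only [id, Real.norm_eq_abs] at h2
  have hqa : |(q:ℝ)| = q := abs_of_nonneg (Nat.cast_nonneg q)
  rw [hqa] at h2
  have := le_abs_self (Real.log q)
  nlinarith

lemma gsp_upper_eps {Ω H : Type*} [MeasurableSpace Ω] (P : Measure Ω) [IsProbabilityMeasure P]
    [NormedAddCommGroup H] [InnerProductSpace ℝ H] (X : Ω → H) (e : ℕ → H) (c v0 : ℝ) (hc : 0 < c) (hv0 : 0 ≤ v0)
    (hX : AEStronglyMeasurable X P) (hF : GspFacts P X e c v0) (ε : ℝ) (hε : 0 < ε) :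
    ∃ C2 : ℝ, ∀ᶠ q : ℕ in atTop, ∀ n : ℕ, Real.exp ((1 + 4 * ε) * (q:ℝ)^5) ≤ n →
      quantErr P X n ≤ √((2 * c + 2 * c * ε + C2 / q) / (q:ℝ)^5) := by
  have hκ := gspKappa_nonneg
  set A := 1 + (v0 + c)^2 * gspKappa with hA
  set K := 2/ε + 2 * gspKappa/ε^2 with hK
  refine ⟨A + c * ε * gspKappa + c * K / (4 * ε), ?_⟩
  filter_upwards [gsp_ev_log ε hε, eventually_ge_atTop 2] with q hlog hq n hn
  have hq0 : (0:ℝ) < q := by positivity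
  have hq1 : (1:ℝ) ≤ q := by exact_mod_cast (by omega : 1 ≤ q)
  set d := q^5 with hd
  set Q := q^4 with hQ
  have hQd : Q ≤ d := Nat.pow_le_pow_right (by omega) (by norm_num)
  have hQ1 : 1 ≤ Q := Nat.one_le_pow _ _ (by omega)
  have hd1 : 1 ≤ d := hQ1.trans hQd
  obtain ⟨D, hD⟩ : ∃ D, Q + D = d + 1 := ⟨d + 1 - Q, by omega⟩
  have hD1 : 1 ≤ D := by omega
  have hDd : (D:ℝ) ≤ d := by exact_mod_cast (by omega : D ≤ d)
  have hdR : (d:ℝ) = (q:ℝ)^5 := by rw [hd]; push_cast; rfl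
  have hQR : (Q:ℝ) = (q:ℝ)^4 := by rw [hQ]; push_cast; rfl
  have hD0 : (0:ℝ) < D := by exact_mod_cast hD1
  have hd0 : (0:ℝ) < d := by exact_mod_cast hd1
  set r : ℝ := d / √c with hr
  have hr0 : 0 < r := by positivity
  have hr2 : r^2 = (d:ℝ)^2 / c := by rw [hr, div_pow, Real.sq_sqrt hc.le]
  set s : Fin D → ℝ := fun i => r^2 * (c/((Q+i : ℕ):ℝ)^2) with hs
  have hs' : ∀ i, s i = ((d:ℝ) / (Q+i : ℕ))^2 := by
    intro i
    have : (0:ℝ) < ((Q+i : ℕ):ℝ) := by exact_mod_cast (by omega : 0 < Q + i)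
    simp only [hs, hr2]; field_simp
  have hs1 : ∀ i, 1 ≤ s i := by
    intro i
    have h0 : (0:ℝ) < ((Q+i : ℕ):ℝ) := by exact_mod_cast (by omega : 0 < Q + i)
    have h1 : ((Q+i : ℕ):ℝ) ≤ d := by
      have := i.2
      exact_mod_cast (by omega : Q + i ≤ d)
    rw [hs']
    exact one_le_pow₀ ((one_le_div h0).2 h1)
  have hsL : ∀ i, s i ≤ (q:ℝ)^2 := by
    intro i
    rw [hs']
    have hQ0 : (0:ℝ) < Q := by positivity
    have h1 : (Q:ℝ) ≤ ((Q+i : ℕ):ℝ) := by exact_mod_cast (by omega : Q ≤ Q + i)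
    have : (d:ℝ) / (Q+i : ℕ) ≤ q := by
      rw [div_le_iff₀ (by linarith)]
      calc (d:ℝ) = q * Q := by rw [hdR, hQR]; ring
        _ ≤ _ := by gcongr
    gcongr
  set n' : ℕ := ⌈Real.exp ((1 + 3 * ε) * d)⌉₊ with hn'
  set δ : ℝ := ε / (q:ℝ)^2 with hδ
  obtain ⟨C, hC, hCcard, hCint⟩ := gsp_achieve hD1 s hs1 ((q:ℝ)^2) hsL ε hε δ (by positivity) n' _ rfl
  set t := (∑ j, Real.log (s j)) / 2 + 2 * ε * D with ht
  have ht_le : t ≤ (1 + 2 * ε) * d := by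
    have h1 : (∑ j, Real.log (s j)) / 2 = ∑ i : Fin D, Real.log ((d:ℝ) / (Q+i : ℕ)) := by
      rw [Finset.sum_div]
      refine Finset.sum_congr rfl fun i _ => ?_
      rw [hs', Real.log_pow]; push_cast; ring
    have h2 := gsp_fine_sum Q D d hQ1 hd1 hD
    rw [ht, h1]
    nlinarith
  have hx1 : Real.exp (-(ε * D)) ≤ 1 / (ε * D) := by
    rw [Real.exp_neg, ← one_div]
    apply one_div_le_one_div_of_le (by positivity)
    linarith [Real.add_one_le_exp (ε * D)]
  have hx2 : Real.exp (-(n' * Real.exp (-t))) ≤ 1 / (ε * D) := by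
    refine le_trans ?_ hx1
    apply Real.exp_le_exp.2
    have h1 : ε * D ≤ n' * Real.exp (-t) := by
      calc ε * D ≤ ε * d := by gcongr
        _ ≤ Real.exp (ε * d) := by linarith [Real.add_one_le_exp (ε * d)]
        _ = Real.exp ((1 + 3 * ε) * d) * Real.exp (-((1 + 2 * ε) * d)) := by
            rw [← Real.exp_add]; congr 1; ring
        _ ≤ n' * Real.exp (-t) := by
            gcongr
            exact Nat.le_ceil _
    linarith
  have hfine : ∫ x, C.inf' hC (fun a => ∑ j, (x j - a j)^2) ∂(gspG s) ≤ d * (1+ε) + ε * (d + gspKappa) + (q:ℝ)^4 * K / (4 * ε) := by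
    refine hCint.trans ?_
    calc _ ≤ D * (1 + ε) + (q:ℝ)^2 * (δ * (D + gspKappa) + D / (4 * δ) *
          (1/(ε * D) + 2 * (gspKappa / (ε ^ 2 * D)) + 1/(ε * D))) := by gcongr
      _ = D * (1+ε) + ε * (D + gspKappa) + (q:ℝ)^4 * K / (4 * ε) := by
          rw [hδ, hK]; field_simp; ring
      _ ≤ _ := by gcongr
  obtain ⟨α, hα, hcard, hint⟩ := gsp_upper_det P X e c v0 hc hv0 hX hF Q D d hQ1 hD1 hd1 r hr0 C hC
  have hαn : α.card ≤ n := by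
    have h1 : (α.card : ℝ) ≤ (2 * (d:ℝ)^2 + 1)^Q * (n' + 1) := by
      have : α.card ≤ (2 * d^2 + 1)^Q * (n' + 1) := hcard.trans (Nat.mul_le_mul_left _ hCcard)
      exact_mod_cast this
    have h2 : (2 * (d:ℝ)^2 + 1)^Q ≤ Real.exp ((q:ℝ)^4 * (Real.log 3 + 10 * Real.log q)) := by
      have h3 : 2 * (d:ℝ)^2 + 1 ≤ Real.exp (Real.log 3 + 10 * Real.log q) := by
        have h4 : Real.exp (Real.log 3 + 10 * Real.log q) = 3 * (q:ℝ)^10 := by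
          rw [Real.exp_add, Real.exp_log (by norm_num), mul_comm (10:ℝ), Real.exp_mul, Real.exp_log hq0]
          norm_cast
        rw [h4, hdR]
        have : (1:ℝ) ≤ (q:ℝ)^10 := one_le_pow₀ hq1
        have h5 : ((q:ℝ)^5)^2 = (q:ℝ)^10 := by ring
        rw [h5]; linarith
      calc _ ≤ (Real.exp (Real.log 3 + 10 * Real.log q))^Q := by gcongr
        _ = _ := by rw [← Real.exp_nat_mul, hQR]
    have h3 : (n':ℝ) + 1 ≤ Real.exp (Real.log 3 + (1 + 3 * ε) * d) := by
      rw [Real.exp_add, Real.exp_log (by norm_num)]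
      have h4 : (n':ℝ) < Real.exp ((1 + 3 * ε) * d) + 1 := Nat.ceil_lt_add_one (by positivity)
      have h5 : 1 ≤ Real.exp ((1 + 3 * ε) * d) := Real.one_le_exp (by positivity)
      linarith
    have h4 : (α.card : ℝ) ≤ n := by
      refine h1.trans (le_trans ?_ hn)
      calc _ ≤ Real.exp ((q:ℝ)^4 * (Real.log 3 + 10 * Real.log q)) * Real.exp (Real.log 3 + (1 + 3 * ε) * d) := by gcongr
        _ = Real.exp ((q:ℝ)^4 * (Real.log 3 + 10 * Real.log q) + (Real.log 3 + (1 + 3 * ε) * d)) := (Real.exp_add _ _).symm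
        _ ≤ _ := by
          apply Real.exp_le_exp.2
          rw [hdR]
          have h9 : Real.log 9 = 2 * Real.log 3 := by
            rw [show (9:ℝ) = 3^2 by norm_num, Real.log_pow]; push_cast; ring
          rw [h9] at hlog
          have h3p : 0 ≤ Real.log 3 := Real.log_nonneg (by norm_num)
          have hq4 : 1 ≤ (q:ℝ)^4 := one_le_pow₀ hq1
          have h6 := mul_le_mul_of_nonneg_left hlog (by positivity : 0 ≤ (q:ℝ)^4)
          have h7 : Real.log 3 ≤ (q:ℝ)^4 * Real.log 3 := le_mul_of_one_le_left h3p hq4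
          have h8 : (q:ℝ)^4 * (ε * q) = ε * (q:ℝ)^5 := by ring
          rw [h8] at h6
          linarith
    exact_mod_cast h4
  refine (csInf_le (s := { r : ℝ | ∃ α : Finset H, ∃ hα : α.Nonempty, α.card ≤ n ∧
    r = Real.sqrt (∫ ω, α.inf' hα (fun a => ‖X ω - a‖ ^ 2) ∂P) }) ⟨0, ?_⟩ ⟨α, hα, hαn, rfl⟩).trans ?_
  · rintro x ⟨_, _, _, rfl⟩
    exact Real.sqrt_nonneg _
  · apply Real.sqrt_le_sqrt
    refine hint.trans ?_
    have hQD : (Q:ℝ) + D - 1 = d := by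
      have : (Q:ℝ) + D = d + 1 := by exact_mod_cast hD
      linarith
    rw [hQD]
    have hr2' : 1 / r^2 = 1 / ((d:ℝ)^2 / c) := by rw [hr2]
    have hcd : 0 ≤ 1 / ((d:ℝ)^2 / c) := by positivity
    have h1 := mul_le_mul_of_nonneg_left hfine hcd
    have hA0 : 0 ≤ A := by positivity
    have hK0 : 0 ≤ K := by positivity
    have h2 : (Q:ℝ) * (A / (d:ℝ)^2) + 1 / ((d:ℝ)^2 / c) * (d * (1+ε) + ε * (d + gspKappa) + (q:ℝ)^4 * K / (4 * ε)) + c * (1/(d:ℝ))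
       = (2 * c + 2 * c * ε + (A + c * K / (4 * ε)) / q + c * ε * gspKappa / (q:ℝ)^5) / (q:ℝ)^5 := by
      rw [hQR, hdR]; field_simp; ring
    have h3 : c * ε * gspKappa / (q:ℝ)^5 ≤ c * ε * gspKappa / q := by
      apply div_le_div_of_nonneg_left (by positivity) hq0
      exact le_self_pow₀ hq1 (by norm_num)
    calc _ ≤ (2 * c + 2 * c * ε + (A + c * K / (4 * ε)) / q + c * ε * gspKappa / (q:ℝ)^5) / (q:ℝ)^5 := by
          rw [← h2]
          rw [← hr2'] at h1 ⊢
          refine add_le_add (add_le_add le_rfl h1) le_rfl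
      _ ≤ (2 * c + 2 * c * ε + (A + c * K / (4 * ε)) / q + c * ε * gspKappa / q) / (q:ℝ)^5 := by gcongr
      _ = _ := by congr 1; field_simp; ring

lemma gsp_exists_eps (c η : ℝ) (h : √(2 * c) < η) :
    ∃ ε : ℝ, 0 < ε ∧ √((1 + 4 * ε) * (2 * c + 2 * c * ε)) < η := by
  have hcont : Continuous (fun ε : ℝ => √((1 + 4 * ε) * (2 * c + 2 * c * ε))) := by fun_prop
  have h0 := hcont.tendsto 0
  have h1 : √((1 + 4 * (0:ℝ)) * (2 * c + 2 * c * 0)) = √(2 * c) := by norm_num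
  rw [h1] at h0
  have h2 := (h0.eventually_lt_const h).filter_mono (nhdsWithin_le_nhds (s := Set.Ioi 0))
  obtain ⟨ε, h3, h4⟩ := (h2.and self_mem_nhdsWithin).exists
  exact ⟨ε, h4, h3⟩

lemma gsp_upper_fun_lim (a b C : ℝ) :
    Tendsto (fun q : ℕ => √(a * (1 + 1 / (q:ℝ))^5 * (b + C / q))) atTop (nhds √(a * b)) := by
  have h1 : Tendsto (fun q : ℕ => 1 / (q:ℝ)) atTop (nhds 0) := tendsto_one_div_atTop_nhds_zero_nat
  have h2 : Tendsto (fun q : ℕ => C / (q:ℝ)) atTop (nhds 0) := tendsto_const_div_atTop_nhds_zero_nat C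
  have h3 := (((h1.const_add 1).pow 5).const_mul a).mul (h2.const_add b)
  have h4 := (Real.continuous_sqrt.tendsto _).comp h3
  simpa [Function.comp_def] using h4

lemma gsp_floor (L a : ℝ) (ha : 0 < a) (hL : 0 ≤ L) :
    a * (⌊(L / a)^(1/5 : ℝ)⌋₊ : ℝ)^5 ≤ L ∧ L ≤ a * ((⌊(L / a)^(1/5 : ℝ)⌋₊ : ℝ) + 1)^5 := by
  set y := (L / a)^(1/5 : ℝ) with hy
  have hy0 : 0 ≤ y := by positivity
  have hy5 : a * y^5 = L := by
    rw [hy, ← Real.rpow_natCast, ← Real.rpow_mul (by positivity)]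
    norm_num
    field_simp
  constructor
  · rw [← hy5]
    gcongr
    exact Nat.floor_le hy0
  · rw [← hy5]
    gcongr
    exact (Nat.lt_floor_add_one y).le

lemma gsp_floor_tendsto (a : ℝ) (ha : 0 < a) :
    Tendsto (fun n : ℕ => ⌊(Real.log n / a)^(1/5 : ℝ)⌋₊) atTop atTop := by
  have h1 : Tendsto (fun n : ℕ => Real.log n / a) atTop atTop :=
    (Real.tendsto_log_atTop.comp tendsto_natCast_atTop_atTop).atTop_div_const ha
  exact tendsto_nat_floor_atTop.comp ((tendsto_rpow_atTop (by norm_num)).comp h1)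

lemma gsp_upper_lim {Ω H : Type*} [MeasurableSpace Ω] (P : Measure Ω) [IsProbabilityMeasure P]
    [NormedAddCommGroup H] [InnerProductSpace ℝ H] (X : Ω → H) (e : ℕ → H) (c v0 : ℝ) (hc : 0 < c) (hv0 : 0 ≤ v0)
    (hX : AEStronglyMeasurable X P) (hF : GspFacts P X e c v0) (η : ℝ) (hη : √(2 * c) < η) :
    ∀ᶠ n : ℕ in atTop, √(Real.log n) * quantErr P X n < η := by
  obtain ⟨ε, hε, hεη⟩ := gsp_exists_eps c η hη
  obtain ⟨C2, hC2⟩ := gsp_upper_eps P X e c v0 hc hv0 hX hF ε hε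
  have ha : 0 < 1 + 4 * ε := by positivity
  have h1 := (gsp_upper_fun_lim (1 + 4 * ε) (2 * c + 2 * c * ε) C2).eventually_lt_const hεη
  have h2 : ∀ᶠ q : ℕ in atTop, 0 ≤ 2 * c + 2 * c * ε + C2 / q := by
    have h2 : Tendsto (fun q : ℕ => C2 / (q:ℝ)) atTop (nhds 0) := tendsto_const_div_atTop_nhds_zero_nat C2
    have h3 := h2.const_add (2 * c + 2 * c * ε)
    exact (h3.eventually_const_lt (by rw [add_zero]; positivity)).mono fun q hq => hq.le
  have hall := (gsp_floor_tendsto (1 + 4 * ε) ha).eventually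
    (((hC2.and h1).and h2).and (eventually_ge_atTop 1))
  filter_upwards [hall, eventually_ge_atTop 1] with n hn hn1
  obtain ⟨hf1, hf2⟩ := gsp_floor (Real.log n) (1 + 4 * ε) ha (Real.log_natCast_nonneg n)
  set q := ⌊(Real.log n / (1 + 4 * ε))^(1/5 : ℝ)⌋₊ with hq
  obtain ⟨⟨⟨hq1, hq2⟩, hq3⟩, hq4⟩ := hn
  have hq0 : (0:ℝ) < q := by exact_mod_cast hq4
  have hn0 : (0:ℝ) < n := by exact_mod_cast hn1
  have hexp : Real.exp ((1 + 4 * ε) * (q:ℝ)^5) ≤ n := by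
    rw [← Real.exp_log hn0]
    exact Real.exp_le_exp.2 hf1
  refine lt_of_le_of_lt ?_ hq2
  calc √(Real.log n) * quantErr P X n
      ≤ √((1 + 4 * ε) * ((q:ℝ) + 1)^5) * √((2 * c + 2 * c * ε + C2 / q) / (q:ℝ)^5) := by
        refine (mul_le_mul_of_nonneg_left (hq1 n hexp) (Real.sqrt_nonneg _)).trans ?_
        exact mul_le_mul_of_nonneg_right (Real.sqrt_le_sqrt hf2) (Real.sqrt_nonneg _)
    _ = _ := by
        rw [← Real.sqrt_mul (by positivity)]
        congr 1
        field_simp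

/-- For a GSP-Wiener process `Z` on `[0,T]` (centered Gaussian with covariance
`min (k+t) (k+s)`, a.s. continuous paths), viewed as an `L²([0,T])`-valued
random variable `X`, the quantization error has the sharp asymptotics
`e_n(Z) ~ (√2·T/π)·(ln n)^{-1/2}`. -/
theorem gsp_wiener_quantization_error_sharp
    {Ω : Type*} [MeasurableSpace Ω] (P : Measure Ω) [IsProbabilityMeasure P]
    (T k : ℝ) (hT : 0 < T) (hk : 0 ≤ k)
    (Z : ℝ → Ω → ℝ)
    (hGauss : ∀ (m : ℕ) (t : Fin m → ℝ), (∀ i, t i ∈ Set.Icc 0 T) →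
      ∀ c : Fin m → ℝ,
        Measure.map (fun ω => ∑ i, c i * Z (t i) ω) P =
          gaussianReal 0
            (∑ i, ∑ j, c i * c j * min (k + t i) (k + t j)).toNNReal)
    (hcont : ∀ᵐ ω ∂P, ContinuousOn (fun t => Z t ω) (Set.Icc 0 T))
    (X : Ω → Lp ℝ 2 (volume.restrict (Set.Icc 0 T)))
    (hXmeas : AEStronglyMeasurable X P)
    (hXZ : ∀ᵐ ω ∂P,
      (X ω : ℝ → ℝ) =ᵐ[volume.restrict (Set.Icc 0 T)] fun t => Z t ω) :
    Tendsto (fun n : ℕ => Real.sqrt (Real.log n) * quantErr P X n)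
      atTop (nhds (Real.sqrt 2 * T / Real.pi)) := by
  obtain ⟨e, hF⟩ := gsp_facts P T k Z hT hk hGauss hcont X hXmeas hXZ
  have hpi := Real.pi_pos
  have hc : 0 < T^2 / Real.pi^2 := by positivity
  have hv0 : 0 ≤ k * T + T^2 / 3 := by positivity
  have hlim : Real.sqrt 2 * T / Real.pi = √(2 * (T^2 / Real.pi^2)) := by
    rw [Real.sqrt_mul (by norm_num), ← div_pow, Real.sqrt_sq (by positivity), mul_div_assoc]
  rw [hlim]
  refine tendsto_order.2 ⟨fun η hη => ?_, fun η hη => gsp_upper_lim P X e _ _ hc hv0 hXmeas hF η hη⟩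
  filter_upwards [(gsp_lower_lim (T^2 / Real.pi^2)).eventually_const_lt hη, eventually_ge_atTop 1] with n hn hn1
  refine hn.trans_le ?_
  gcongr
  exact gsp_quantErr_lower P X e _ _ hc hXmeas hF n hn1
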